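/- Let v ∈ L^p(ρ dx) with distributional fractional Laplacian (−Δ)^s v ∈ L^{p′}(ρ^{−(p′−1)} dx) (with ρ, γ_0 ∈ [0,d), γ ∈ [0,d+ps] as in the definition of X_{p,s,ρ}), and let v_ε = η_ε ∗ v be its standard mollification. Then (−Δ)^s(v_ε) = ((−Δ)^s v)_ε, i.e., the fractional Laplacian of the mollification equals the mollification of the fractional Laplacian; consequently v_ε ∈ C^∞(ℝ^d) ∩ X_{p,s,ρ} and v_ε → v in X_{p,s,ρ} as ε → 0, so C^∞(ℝ^d) ∩ X_{p,s,ρ} is dense in X_{p,s,ρ}. -/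

import Mathlib

open MeasureTheory Filter Metric Set
open scoped Topology ENNReal

noncomputable section

abbrev Ed (d : ℕ) := EuclideanSpace ℝ (Fin d)

/-- Truncated (away from the singularity) fractional-Laplacian integral. -/
noncomputable def fracLapTrunc (d : ℕ) (s : ℝ) (f : Ed d → ℝ) (x : Ed d) (ε : ℝ) : ℝ :=
  ∫ y in {y : Ed d | ε ≤ dist x y}, (f x - f y) / dist x y ^ ((d : ℝ) + 2 * s)

/-- Fractional Laplacian, as a principal value (limit of truncated integrals),
with normalization constant `Cds`. -/
noncomputable def fracLap (d : ℕ) (s Cds : ℝ) (f : Ed d → ℝ) (x : Ed d) : ℝ :=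
  Cds * limUnder (𝓝[>] (0:ℝ)) (fracLapTrunc d s f x)

/-- `V` is the distributional fractional Laplacian of `v`. -/
def IsDistFracLap (d : ℕ) (s Cds : ℝ) (v V : Ed d → ℝ) : Prop :=
  ∀ φ : Ed d → ℝ, ContDiff ℝ (⊤ : ℕ∞) φ → HasCompactSupport φ →
    ∫ x, v x * fracLap d s Cds φ x = ∫ x, V x * φ x

/-- The nonlocal quantity `l_{p,s}(f)(x) = ∫ |f x - f y|^p / |x-y|^{d+ps} dy`. -/
noncomputable def lps (d : ℕ) (p s : ℝ) (f : Ed d → ℝ) (x : Ed d) : ℝ :=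
  ∫ y, |f x - f y| ^ p / dist x y ^ ((d : ℝ) + p * s)

/-- A weight comparable to `|x|^{-γ₀}` on the unit ball and to `|x|^{-γ}` outside. -/
def TwoPowerWeight (d : ℕ) (ρ : Ed d → ℝ) (c C γ₀ γ : ℝ) : Prop :=
  0 < c ∧ c < C ∧
  (∀ᵐ x : Ed d, ‖x‖ ≤ 1 → c * ‖x‖ ^ (-γ₀) ≤ ρ x ∧ ρ x ≤ C * ‖x‖ ^ (-γ₀)) ∧
  (∀ᵐ x : Ed d, 1 < ‖x‖ → c * ‖x‖ ^ (-γ) ≤ ρ x ∧ ρ x ≤ C * ‖x‖ ^ (-γ))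

/-- Standard mollification `f_ε = η_ε ∗ f` with `η_ε(x) = ε^{-d} η(x/ε)`. -/
noncomputable def mollify (d : ℕ) (η : Ed d → ℝ) (ε : ℝ) (f : Ed d → ℝ) (x : Ed d) : ℝ :=
  ∫ y, (ε ^ (-(d:ℝ)) * η (ε⁻¹ • (x - y))) * f y

/-- A smooth nonnegative probability mollifier supported in the unit ball. -/
def IsMollifier (d : ℕ) (η : Ed d → ℝ) : Prop :=
  ContDiff ℝ (⊤ : ℕ∞) η ∧ (∀ x, 0 ≤ η x) ∧ tsupport η ⊆ closedBall (0 : Ed d) 1 ∧ ∫ x, η x = 1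

/-- Membership in the weighted Lebesgue space `L^p(ρ dx)`. -/
def MemWLp (d : ℕ) (p : ℝ) (ρ f : Ed d → ℝ) : Prop :=
  AEStronglyMeasurable f (volume : Measure (Ed d)) ∧
    Integrable (fun x => |f x| ^ p * ρ x)

/-- `v ∈ X_{p,s,ρ}` with distributional fractional Laplacian `V`. -/
def MemX (d : ℕ) (s Cds p : ℝ) (ρ : Ed d → ℝ) (v V : Ed d → ℝ) : Prop :=
  MemWLp d p ρ v ∧ IsDistFracLap d s Cds v V ∧
    MemWLp d (p / (p - 1)) (fun x => ρ x ^ (-(p / (p - 1) - 1))) V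

/-- Weighted `L^p` norm. -/
noncomputable def wNorm (d : ℕ) (p : ℝ) (ρ f : Ed d → ℝ) : ℝ :=
  (∫ x, |f x| ^ p * ρ x) ^ (1 / p)

/-- Norm of the space `X_{p,s,ρ}` (on the pair `(v, (−Δ)^s v)`). -/
noncomputable def xNorm (d : ℕ) (p : ℝ) (ρ : Ed d → ℝ) (v V : Ed d → ℝ) : ℝ :=
  Real.sqrt ((wNorm d p ρ v) ^ 2 +
    (wNorm d (p / (p - 1)) (fun x => ρ x ^ (-(p / (p - 1) - 1))) V) ^ 2)

/-- Riesz potential `I_{d,s} ∗ f` with kernel constant `κ`. -/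
noncomputable def riesz (d : ℕ) (s κ : ℝ) (f : Ed d → ℝ) (x : Ed d) : ℝ :=
  ∫ y, κ * ‖x - y‖ ^ (-((d:ℝ) - 2 * s)) * f y

end

/-
Write `a = d + 2s`. Pairing `h` with `-h` in the principal value shows that the truncated fractional
Laplacians of a test function `ψ` are bounded, uniformly in the truncation, by a multiple of
`(1 + ‖x‖) ^ (-a)`. If `v (1 + ‖x‖) ^ (-a)` is integrable, dominated convergence therefore gives the
pointwise identity `(-Δ)^s (ψ ⋆ v) = ((-Δ)^s ψ) ⋆ v`, and testing the distributional equation for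
`v` with the reflected translates `ψ (x - ·)` identifies the right-hand side with
`ψ ⋆ (-Δ)^s v`. Hölder's inequality supplies the integrability for every `v` in `L^p(ρ dx)`.

A two-power weight need not be a global `A₁` weight, but it satisfies the `A₁` inequality on balls
of bounded radius. Schur's test, with test function `1` on `L^p(ρ dx)` and `ρ` on the dual space
`L^{p'}(ρ^{-(p'-1)} dx)`, then bounds mollification on both spaces uniformly for small `ε`, and the
convergence `v_ε → v` passes from compactly supported continuous functions to all of the space.
-/

open scoped Convolution

lemma rpow_le_rpow_abs {A t : ℝ} (hA : 1 ≤ A) (hAt : A⁻¹ ≤ t) (htA : t ≤ A) (b : ℝ) :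
    t ^ b ≤ A ^ |b| := by
  have hA₀ : 0 < A := by linarith
  have ht : 0 < t := (inv_pos.2 hA₀).trans_le hAt
  rcases le_total 0 b with hb | hb
  · rw [abs_of_nonneg hb]
    exact Real.rpow_le_rpow ht.le htA hb
  · rw [abs_of_nonpos hb, Real.rpow_neg hA₀.le, ← Real.inv_rpow hA₀.le]
    exact Real.rpow_le_rpow_of_nonpos (inv_pos.2 hA₀) hAt hb

section PolyDecay

variable {E : Type*} [NormedAddCommGroup E]

/-- The profile `(1 + ‖x‖) ^ (-a)`. With `a = d + 2s` it is the decay at infinity of the fractional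
Laplacian of a test function, so that `∫ |f| polyDecay a < ∞` is the natural condition under which
the fractional Laplacian can be paired with `f`. -/
noncomputable def polyDecay (a : ℝ) (x : E) : ℝ := (1 + ‖x‖) ^ (-a)

lemma polyDecay_pos (a : ℝ) (x : E) : 0 < polyDecay a x := by
  unfold polyDecay; positivity

lemma polyDecay_zero_right (a : ℝ) : polyDecay a (0 : E) = 1 := by
  rw [polyDecay, norm_zero, add_zero, Real.one_rpow]

lemma polyDecay_neg (a : ℝ) (x : E) : polyDecay a (-x) = polyDecay a x := by
  simp only [polyDecay, norm_neg]

lemma continuous_polyDecay (a : ℝ) : Continuous (polyDecay a : E → ℝ) :=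
  Continuous.rpow_const (by fun_prop) fun x => Or.inl (by positivity)

lemma polyDecay_rpow (a q : ℝ) (x : E) : polyDecay a x ^ q = polyDecay (a * q) x := by
  rw [polyDecay, ← Real.rpow_mul (by positivity), neg_mul, polyDecay]

lemma one_add_norm_rpow_mul_polyDecay (a : ℝ) (x : E) : (1 + ‖x‖) ^ a * polyDecay a x = 1 := by
  rw [polyDecay, ← Real.rpow_add (by positivity), add_neg_cancel, Real.rpow_zero]

lemma polyDecay_le_of_norm_sub_le (a : ℝ) {x y : E} {R : ℝ} (h : ‖x - y‖ ≤ R) :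
    polyDecay a x ≤ (1 + R) ^ |a| * polyDecay a y := by
  have hR : 0 ≤ R := (norm_nonneg _).trans h
  have hxy := norm_sub_norm_le x y
  have hyx := norm_sub_norm_le y x
  rw [norm_sub_rev] at hyx
  rw [polyDecay, polyDecay, ← div_le_iff₀ (by positivity), ← Real.div_rpow (by positivity)
    (by positivity), ← abs_neg a]
  refine rpow_le_rpow_abs (by linarith) ?_ ?_ _
  · rw [inv_le_comm₀ (by positivity) (by positivity), inv_div, div_le_iff₀ (by positivity)]
    nlinarith [norm_nonneg x]
  · rw [div_le_iff₀ (by positivity)]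
    nlinarith [norm_nonneg y]

lemma inv_norm_rpow_le_polyDecay {a : ℝ} (ha : 0 ≤ a) {δ : ℝ} (hδ : 0 < δ) {x : E}
    (hx : δ ≤ ‖x‖) : (‖x‖ ^ a)⁻¹ ≤ (1 + δ⁻¹) ^ a * polyDecay a x := by
  have hpos : 0 < ‖x‖ := hδ.trans_le hx
  rw [polyDecay, Real.rpow_neg (by positivity), ← div_eq_mul_inv, le_div_iff₀ (by positivity),
    inv_mul_le_iff₀ (by positivity), ← Real.mul_rpow hpos.le (by positivity)]
  refine Real.rpow_le_rpow (by positivity) ?_ ha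
  have : 1 ≤ ‖x‖ * δ⁻¹ := by rwa [← div_eq_mul_inv, one_le_div hδ]
  linarith

variable [NormedSpace ℝ E] [FiniteDimensional ℝ E] [MeasurableSpace E] [BorelSpace E]
  {μ : Measure E}

lemma integrable_polyDecay [μ.IsAddHaarMeasure] {a : ℝ} (ha : Module.finrank ℝ E < a) :
    Integrable (polyDecay a : E → ℝ) μ :=
  integrable_one_add_norm ha

lemma locallyIntegrable_of_mul_polyDecay {a : ℝ} {f : E → ℝ}
    (hf : Integrable (fun x => f x * polyDecay a x) μ) : LocallyIntegrable f μ := by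
  have hcont : Continuous fun x : E => (1 + ‖x‖) ^ a :=
    Continuous.rpow_const (by fun_prop) fun x => Or.inl (by positivity)
  refine ((hf.locallyIntegrable.locallyIntegrableOn univ).continuousOn_mul hcont.continuousOn
    isOpen_univ.isLocallyClosed |> locallyIntegrableOn_univ.1).congr (.of_forall fun x => ?_)
  simp only [mul_left_comm _ (f x), one_add_norm_rpow_mul_polyDecay, mul_one]

end PolyDecay

section ConvolutionReal

variable {E : Type*} [NormedAddCommGroup E] [MeasureSpace E]

lemma convolution_apply (f g : E → ℝ) (x : E) : (f ⋆ g) x = ∫ t, f t * g (x - t) := rfl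

variable [MeasurableAdd E] [MeasurableNeg E] [(volume : Measure E).IsAddLeftInvariant]
  [(volume : Measure E).IsNegInvariant]

lemma convolution_apply_swap (f g : E → ℝ) (x : E) : (f ⋆ g) x = ∫ t, f (x - t) * g t :=
  convolution_lsmul_swap

lemma convolution_comm (f g : E → ℝ) : f ⋆ g = g ⋆ f := by
  ext x
  simp only [convolution_apply_swap f, convolution_apply g, mul_comm]

end ConvolutionReal

section ConvolutionPolyDecay

variable {E : Type*} [NormedAddCommGroup E] {ψ f g : E → ℝ} {a C : ℝ}

lemma exists_mul_polyDecay_le_of_hasCompactSupport (hψ : HasCompactSupport ψ) (a : ℝ) :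
    ∃ A : ℝ, ∀ x y, |ψ (x - y)| * polyDecay a x ≤ A * (|ψ (x - y)| * polyDecay a y) := by
  obtain ⟨R, -, hR⟩ := hψ.isCompact.isBounded.subset_closedBall_lt 0 0
  refine ⟨(1 + R) ^ |a|, fun x y => ?_⟩
  by_cases h : ψ (x - y) = 0
  · simp [h]
  · have hxy : ‖x - y‖ ≤ R := by simpa using hR (subset_tsupport ψ h)
    rw [mul_left_comm]
    exact mul_le_mul_of_nonneg_left (polyDecay_le_of_norm_sub_le a hxy) (abs_nonneg _)

variable [NormedSpace ℝ E] [FiniteDimensional ℝ E] [MeasureSpace E] [BorelSpace E]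
  [(volume : Measure E).IsAddHaarMeasure]

lemma convolutionExists_of_abs_le_polyDecay (hg : AEStronglyMeasurable g volume)
    (hgC : ∀ x, |g x| ≤ C * polyDecay a x) (hf : Integrable fun x => f x * polyDecay a x) :
    ConvolutionExists g f (ContinuousLinearMap.lsmul ℝ ℝ) := by
  intro x
  have hfm := (locallyIntegrable_of_mul_polyDecay hf).aestronglyMeasurable
  have hC : 0 ≤ C := nonneg_of_mul_nonneg_left ((abs_nonneg _).trans (hgC 0)) (polyDecay_pos a 0)
  refine Integrable.mono' ((hf.comp_sub_left x).norm.const_mul (C * (1 + ‖x‖) ^ |a|))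
    (hg.smul (hfm.comp_quasiMeasurePreserving (quasiMeasurePreserving_sub_left _ x)))
    (.of_forall fun t => ?_)
  have hdecay : polyDecay a t ≤ (1 + ‖x‖) ^ |a| * polyDecay a (x - t) := by
    rw [← polyDecay_neg a t]
    exact polyDecay_le_of_norm_sub_le a (by rw [← neg_add', norm_neg]; simp)
  calc |g t * f (x - t)| = |g t| * |f (x - t)| := abs_mul _ _
    _ ≤ C * ((1 + ‖x‖) ^ |a| * polyDecay a (x - t)) * |f (x - t)| := by
      gcongr
      exact (hgC t).trans (by gcongr)
    _ = C * (1 + ‖x‖) ^ |a| * ‖f (x - t) * polyDecay a (x - t)‖ := by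
      rw [Real.norm_eq_abs, abs_mul, abs_of_pos (polyDecay_pos _ _)]; ring

lemma integrable_convolution_mul_polyDecay (hψ : Continuous ψ) (hψs : HasCompactSupport ψ)
    (hf : Integrable fun x => f x * polyDecay a x) :
    Integrable fun x => (ψ ⋆ f) x * polyDecay a x := by
  obtain ⟨A, hA⟩ := exists_mul_polyDecay_le_of_hasCompactSupport hψs a
  have hfloc := locallyIntegrable_of_mul_polyDecay hf
  have hcont : Continuous (ψ ⋆ f) := hψs.continuous_convolution_left _ hψ hfloc
  have hdom : Integrable ((fun x => |ψ x|) ⋆ fun x => ‖f x * polyDecay a x‖) :=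
    (hψ.integrable_of_hasCompactSupport hψs).abs.integrable_convolution _ hf.norm
  refine Integrable.mono' (hdom.const_mul A)
    (hcont.mul (continuous_polyDecay a)).aestronglyMeasurable (.of_forall fun x => ?_)
  have hint : Integrable fun t => |ψ (x - t)| * ‖f t * polyDecay a t‖ := by
    simpa using (hψs.abs.convolutionExists_left (ContinuousLinearMap.lsmul ℝ ℝ) hψ.abs
        hf.norm.locallyIntegrable x).integrable_swap
  rw [convolution_apply_swap, convolution_apply_swap, ← integral_mul_const, ← integral_const_mul]
  refine norm_integral_le_of_norm_le (hint.const_mul A) (.of_forall fun t => ?_)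
  rw [norm_mul, norm_mul, norm_mul, Real.norm_of_nonneg (polyDecay_pos a x).le,
    Real.norm_of_nonneg (polyDecay_pos a t).le, mul_right_comm]
  calc _ ≤ A * (|ψ (x - t)| * polyDecay a t) * ‖f t‖ :=
        mul_le_mul_of_nonneg_right (hA x t) (norm_nonneg _)
    _ = _ := by ring

lemma convolution_assoc_of_abs_le_polyDecay (hψ : Continuous ψ) (hψs : HasCompactSupport ψ)
    (hg : AEStronglyMeasurable g volume) (hgC : ∀ x, |g x| ≤ C * polyDecay a x)
    (hf : Integrable fun x => f x * polyDecay a x) : g ⋆ ψ ⋆ f = (g ⋆ ψ) ⋆ f := by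
  have hfloc := locallyIntegrable_of_mul_polyDecay hf
  have hgloc : LocallyIntegrable g volume :=
    ((continuous_polyDecay a).const_mul C).locallyIntegrable.mono hg
      (.of_forall fun x => (hgC x).trans (le_abs_self _))
  have hfabs : Integrable fun x => ‖f x‖ * polyDecay a x :=
    hf.norm.congr (.of_forall fun x => by simp [abs_of_pos (polyDecay_pos a x)])
  ext x
  refine (convolution_assoc _ _ _ _ (fun _ _ _ => mul_assoc _ _ _) hg hψ.aestronglyMeasurable
    hfloc.aestronglyMeasurable ?_ ?_ ?_).symm
  · exact .of_forall fun y => hψs.convolutionExists_right _ hgloc hψ y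
  · exact .of_forall fun y => hψs.norm.convolutionExists_left _ hψ.norm
      (locallyIntegrable_of_mul_polyDecay hfabs) y
  · exact convolutionExists_of_abs_le_polyDecay hg.norm (by simpa using hgC)
      (integrable_convolution_mul_polyDecay hψ.norm hψs.norm hfabs) x

lemma integral_convolution_mul_eq_integral_mul_convolution (hψ : Continuous ψ)
    (hψs : HasCompactSupport ψ) (hg : AEStronglyMeasurable g volume)
    (hgC : ∀ x, |g x| ≤ C * polyDecay a x) (hf : Integrable fun x => f x * polyDecay a x) :
    ∫ x, (ψ ⋆ f) x * g x = ∫ x, f x * ((fun z => ψ (-z)) ⋆ g) x := by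
  set g' : E → ℝ := fun x => g (-x) with hg'
  have hassoc := convolution_assoc_of_abs_le_polyDecay (g := g') hψ hψs
    (hg.comp_quasiMeasurePreserving (Measure.measurePreserving_neg _).quasiMeasurePreserving)
    (fun x => (hgC (-x)).trans_eq (by rw [polyDecay_neg])) hf
  have hrefl : ∀ x, (g' ⋆ ψ) (-x) = ((fun z => ψ (-z)) ⋆ g) x := fun x => by
    rw [convolution_apply_swap, convolution_apply, ← integral_neg_eq_self]
    refine integral_congr_ae (.of_forall fun t => ?_)
    simp only [hg', neg_sub_neg, neg_sub]
    ring
  calc ∫ x, (ψ ⋆ f) x * g x = (g' ⋆ ψ ⋆ f) 0 := by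
        rw [convolution_apply_swap]
        simp only [hg', zero_sub, neg_neg, mul_comm]
    _ = ((g' ⋆ ψ) ⋆ f) 0 := by rw [hassoc]
    _ = _ := by
      simp only [convolution_apply_swap (g' ⋆ ψ), zero_sub, hrefl, mul_comm]

end ConvolutionPolyDecay

section TruncKernel

variable {E : Type*} [NormedAddCommGroup E] {a δ : ℝ}

/-- The kernel `1_{‖h‖ ≥ δ} ‖h‖ ^ (-a)`. For `a = d + 2s` the truncated fractional Laplacian of `f`
is `(∫ truncKernel a δ) f - truncKernel a δ ⋆ f`. -/
noncomputable def truncKernel (a δ : ℝ) : E → ℝ :=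
  indicator {h | δ ≤ ‖h‖} fun h => (‖h‖ ^ a)⁻¹

lemma truncKernel_neg (h : E) : truncKernel a δ (-h) = truncKernel a δ h := by
  simp [truncKernel, indicator]

lemma truncKernel_nonneg (h : E) : 0 ≤ truncKernel a δ h :=
  indicator_nonneg (fun _ _ => by positivity) h

lemma truncKernel_le_inv_norm_rpow (h : E) : truncKernel a δ h ≤ (‖h‖ ^ a)⁻¹ :=
  indicator_le_self' (fun _ _ => by positivity) h

lemma truncKernel_le_polyDecay (ha : 0 ≤ a) (hδ : 0 < δ) (h : E) :
    truncKernel a δ h ≤ (1 + δ⁻¹) ^ a * polyDecay a h :=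
  indicator_le' (fun _ hh => inv_norm_rpow_le_polyDecay ha hδ hh)
    (fun _ _ => mul_nonneg (by positivity) (polyDecay_pos a _).le) h

lemma abs_truncKernel_le_polyDecay (ha : 0 ≤ a) (hδ : 0 < δ) (h : E) :
    |truncKernel a δ h| ≤ (1 + δ⁻¹) ^ a * polyDecay a h :=
  (abs_of_nonneg (truncKernel_nonneg h)).trans_le (truncKernel_le_polyDecay ha hδ h)

lemma tendsto_truncKernel {h : E} (hh : h ≠ 0) :
    Tendsto (fun δ => truncKernel a δ h) (𝓝[>] 0) (𝓝 (‖h‖ ^ a)⁻¹) := by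
  refine tendsto_const_nhds.congr' ?_
  filter_upwards [Ioo_mem_nhdsGT (norm_pos_iff.2 hh)] with δ hδ
  exact (indicator_of_mem (s := {h : E | δ ≤ ‖h‖}) hδ.2.le fun h => (‖h‖ ^ a)⁻¹).symm

variable [MeasurableSpace E] [BorelSpace E]

lemma measurable_truncKernel : Measurable (truncKernel a δ : E → ℝ) :=
  Measurable.indicator (by fun_prop) (measurableSet_le measurable_const measurable_norm)

variable [NormedSpace ℝ E] [FiniteDimensional ℝ E] {μ : Measure E} [μ.IsAddHaarMeasure]

lemma integrable_truncKernel (ha : Module.finrank ℝ E < a) (hδ : 0 < δ) :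
    Integrable (truncKernel a δ : E → ℝ) μ :=
  ((integrable_polyDecay ha).const_mul _).mono' measurable_truncKernel.aestronglyMeasurable
    (.of_forall (abs_truncKernel_le_polyDecay ((Nat.cast_nonneg _).trans ha.le) hδ))

lemma locallyIntegrable_norm_rpow_neg [Nontrivial E] {b : ℝ} (hb : b < Module.finrank ℝ E) :
    LocallyIntegrable (fun x : E => ‖x‖ ^ (-b)) μ := by
  refine locallyIntegrable_of_norm_le_rpow (C := 1) Module.finrank_pos hb
    (.of_forall fun x => ?_) (Measurable.aestronglyMeasurable (by fun_prop))
  rw [Real.norm_of_nonneg (by positivity), one_mul]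

lemma integrable_min_one_sq_mul_inv_norm_rpow [Nontrivial E] (ha : Module.finrank ℝ E < a)
    (ha2 : a < Module.finrank ℝ E + 2) :
    Integrable (fun h : E => min 1 (‖h‖ ^ 2) * (‖h‖ ^ a)⁻¹) μ := by
  have hmeas : AEStronglyMeasurable (fun h : E => min 1 (‖h‖ ^ 2) * (‖h‖ ^ a)⁻¹) μ :=
    Measurable.aestronglyMeasurable (by fun_prop)
  have hcover : (univ : Set E) = closedBall 0 1 ∪ {h | 1 ≤ ‖h‖} := by
    ext h; simp [le_total]
  rw [← integrableOn_univ, hcover]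
  refine IntegrableOn.union ?_ ?_
  · refine ((locallyIntegrable_norm_rpow_neg (b := a - 2) (by linarith)).integrableOn_isCompact
      (isCompact_closedBall 0 1)).mono' hmeas.restrict (.of_forall fun h => ?_)
    rcases eq_or_ne h 0 with rfl | h0
    · simpa using Real.rpow_nonneg le_rfl _
    have hpos : 0 < ‖h‖ := norm_pos_iff.2 h0
    rw [Real.norm_of_nonneg (by positivity)]
    calc min 1 (‖h‖ ^ 2) * (‖h‖ ^ a)⁻¹ ≤ ‖h‖ ^ (2 : ℝ) * ‖h‖ ^ (-a) := by
          rw [Real.rpow_neg hpos.le, Real.rpow_two]; gcongr; exact min_le_right _ _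
      _ = ‖h‖ ^ (-(a - 2)) := by rw [← Real.rpow_add hpos]; ring_nf
  · refine (integrable_truncKernel (E := E) (μ := μ) ha one_pos).integrableOn.mono' hmeas.restrict
      ((ae_restrict_iff' (measurableSet_le measurable_const measurable_norm)).2
        (.of_forall fun h hh => ?_))
    rw [Real.norm_of_nonneg (by positivity), truncKernel, indicator_of_mem hh]
    exact mul_le_of_le_one_left (by positivity) (min_le_left _ _)

end TruncKernel

section SecondDiff

variable {E : Type*} [NormedAddCommGroup E] {φ : E → ℝ}

/-- The symmetric second difference `2 φ x - φ (x + h) - φ (x - h)`, which is `O(‖h‖²)` and thus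
compensates the singularity of the kernel of the fractional Laplacian. -/
def secondDiff (φ : E → ℝ) (x h : E) : ℝ := 2 * φ x - φ (x + h) - φ (x - h)

lemma continuous_secondDiff_left (hφ : Continuous φ) (h : E) :
    Continuous fun x => secondDiff φ x h := by
  unfold secondDiff; fun_prop

lemma continuous_secondDiff_right (hφ : Continuous φ) (x : E) : Continuous (secondDiff φ x) := by
  unfold secondDiff; fun_prop

variable [NormedSpace ℝ E]

lemma hasFDerivAt_add_reflect (hφ : Differentiable ℝ φ) (x k : E) :
    HasFDerivAt (fun k => φ (x + k) + φ (x - k)) (fderiv ℝ φ (x + k) - fderiv ℝ φ (x - k)) k := by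
  have hplus : HasFDerivAt (fun k => φ (x + k)) (fderiv ℝ φ (x + k)) k := by
    simpa [Function.comp_def] using
      (hφ (x + k)).hasFDerivAt.comp k ((hasFDerivAt_id k).const_add x)
  have hminus : HasFDerivAt (fun k => φ (x - k)) (-fderiv ℝ φ (x - k)) k := by
    simpa [Function.comp_def] using
      (hφ (x - k)).hasFDerivAt.comp k ((hasFDerivAt_id k).const_sub x)
  exact (hplus.add hminus).congr_fderiv (sub_eq_add_neg _ _).symm

lemma abs_secondDiff_le_of_lipschitzWith_fderiv {L : NNReal} (hφ : Differentiable ℝ φ)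
    (hL : LipschitzWith L (fderiv ℝ φ)) (x h : E) : |secondDiff φ x h| ≤ 2 * L * ‖h‖ ^ 2 := by
  have hderiv : ∀ k ∈ closedBall (0 : E) ‖h‖,
      ‖fderiv ℝ φ (x + k) - fderiv ℝ φ (x - k)‖ ≤ 2 * L * ‖h‖ := fun k hk => by
    have hk' : ‖k‖ ≤ ‖h‖ := by simpa using hk
    calc ‖fderiv ℝ φ (x + k) - fderiv ℝ φ (x - k)‖ ≤ L * ‖x + k - (x - k)‖ := hL.norm_sub_le _ _
      _ = L * ‖(2 : ℝ) • k‖ := by rw [two_smul]; congr 2; abel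
      _ = 2 * L * ‖k‖ := by rw [norm_smul]; simp; ring
      _ ≤ 2 * L * ‖h‖ := by gcongr
  have hmvt := Convex.norm_image_sub_le_of_norm_hasFDerivWithin_le (x := 0) (y := h)
    (fun k _ => (hasFDerivAt_add_reflect hφ x k).hasFDerivWithinAt) hderiv
    (convex_closedBall 0 ‖h‖) (by simp) (by simp)
  calc |secondDiff φ x h| = ‖φ (x + h) + φ (x - h) - (φ (x + 0) + φ (x - 0))‖ := by
        rw [← abs_neg, Real.norm_eq_abs, secondDiff, add_zero, sub_zero]; ring_nf
    _ ≤ 2 * L * ‖h‖ * ‖h - 0‖ := hmvt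
    _ = 2 * L * ‖h‖ ^ 2 := by rw [sub_zero]; ring

lemma exists_abs_secondDiff_le (hφ : ContDiff ℝ 2 φ) (hφs : HasCompactSupport φ) :
    ∃ M : ℝ, 0 ≤ M ∧ ∀ x h, |secondDiff φ x h| ≤ M * min 1 (‖h‖ ^ 2) := by
  obtain ⟨B, hB⟩ := hφs.exists_bound_of_continuous hφ.continuous
  have hB0 : 0 ≤ B := (norm_nonneg _).trans (hB 0)
  obtain ⟨L, hL⟩ := ContDiff.lipschitzWith_of_hasCompactSupport (𝕂 := ℝ) (hφs.fderiv ℝ)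
    (hφ.fderiv_right (m := 1) (by norm_num)) one_ne_zero
  refine ⟨max (4 * B) (2 * L), by positivity, fun x h => ?_⟩
  rw [mul_min_of_nonneg _ _ (by positivity)]
  refine le_min ?_ ?_
  · have hx := abs_le.1 (hB x)
    have hxp := abs_le.1 (hB (x + h))
    have hxm := abs_le.1 (hB (x - h))
    rw [mul_one, secondDiff]
    exact (abs_le.2 ⟨by linarith, by linarith⟩).trans (le_max_left _ _)
  · exact (abs_secondDiff_le_of_lipschitzWith_fderiv (hφ.differentiable two_ne_zero) hL x h).trans
      (by gcongr; exact le_max_right _ _)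

end SecondDiff

section FracLap

variable {d : ℕ} {s δ : ℝ} {φ f : Ed d → ℝ}

lemma finrank_lt_add_two_mul (hs : 0 < s) :
    (Module.finrank ℝ (Ed d) : ℝ) < (d : ℝ) + 2 * s := by
  rw [finrank_euclideanSpace_fin]; linarith

lemma fracLapTrunc_eq_integral_truncKernel (s : ℝ) (f : Ed d → ℝ) (x : Ed d) (δ : ℝ) :
    fracLapTrunc d s f x δ = ∫ h, truncKernel ((d : ℝ) + 2 * s) δ h * (f x - f (x - h)) := by
  have hms : MeasurableSet {y : Ed d | δ ≤ dist x y} :=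
    measurableSet_le measurable_const (by fun_prop)
  rw [fracLapTrunc, ← integral_indicator hms, ← integral_sub_left_eq_self _ volume x]
  refine integral_congr_ae (.of_forall fun h => ?_)
  simp [truncKernel, indicator, dist_eq_norm, div_eq_inv_mul]

lemma fracLapTrunc_comp_sub_left (s : ℝ) (f : Ed d → ℝ) (x z : Ed d) (δ : ℝ) :
    fracLapTrunc d s (fun y => f (x - y)) z δ = fracLapTrunc d s f (x - z) δ := by
  rw [fracLapTrunc_eq_integral_truncKernel, fracLapTrunc_eq_integral_truncKernel,
    ← integral_neg_eq_self]
  simp only [truncKernel_neg, sub_neg_eq_add, sub_add_eq_sub_sub]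

lemma fracLap_comp_sub_left (s Cds : ℝ) (f : Ed d → ℝ) (x z : Ed d) :
    fracLap d s Cds (fun y => f (x - y)) z = fracLap d s Cds f (x - z) := by
  rw [fracLap, fracLap, funext (fracLapTrunc_comp_sub_left s f x z)]

lemma fracLapTrunc_eq_sub_convolution (hs : 0 < s) (hδ : 0 < δ) {x : Ed d}
    (hf : ConvolutionExistsAt (truncKernel ((d : ℝ) + 2 * s) δ) f x
      (ContinuousLinearMap.lsmul ℝ ℝ)) :
    fracLapTrunc d s f x δ = (∫ h : Ed d, truncKernel ((d : ℝ) + 2 * s) δ h) * f x -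
      (truncKernel ((d : ℝ) + 2 * s) δ ⋆ f) x := by
  simp_rw [fracLapTrunc_eq_integral_truncKernel, mul_sub]
  rw [← integral_mul_const]
  exact integral_sub ((integrable_truncKernel (finrank_lt_add_two_mul hs) hδ).mul_const _) hf

lemma continuous_truncKernel_convolution (hs : 0 < s) (hδ : 0 < δ) (hφ : Continuous φ)
    (hφs : HasCompactSupport φ) : Continuous (truncKernel ((d : ℝ) + 2 * s) δ ⋆ φ) :=
  hφs.continuous_convolution_right _
    (integrable_truncKernel (finrank_lt_add_two_mul hs) hδ).locallyIntegrable hφ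

lemma convolutionExists_truncKernel (hs : 0 < s) (hδ : 0 < δ) (hφ : Continuous φ)
    (hφs : HasCompactSupport φ) : ConvolutionExists (truncKernel ((d : ℝ) + 2 * s) δ) φ
      (ContinuousLinearMap.lsmul ℝ ℝ) :=
  hφs.convolutionExists_right _
    (integrable_truncKernel (finrank_lt_add_two_mul hs) hδ).locallyIntegrable hφ

lemma continuous_fracLapTrunc (hs : 0 < s) (hδ : 0 < δ) (hφ : Continuous φ)
    (hφs : HasCompactSupport φ) : Continuous fun x => fracLapTrunc d s φ x δ := by
  simp_rw [fun x => fracLapTrunc_eq_sub_convolution hs hδ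
    (convolutionExists_truncKernel hs hδ hφ hφs x)]
  exact (hφ.const_mul _).sub (continuous_truncKernel_convolution hs hδ hφ hφs)

lemma fracLapTrunc_eq_integral_secondDiff (hs : 0 < s) (hδ : 0 < δ) (hφ : Continuous φ)
    (hφs : HasCompactSupport φ) (x : Ed d) :
    fracLapTrunc d s φ x δ =
      ∫ h, truncKernel ((d : ℝ) + 2 * s) δ h * (secondDiff φ x h / 2) := by
  have hright : Integrable fun h =>
      truncKernel ((d : ℝ) + 2 * s) δ h * (φ x - φ (x - h)) := by
    simp_rw [mul_sub]
    exact ((integrable_truncKernel (finrank_lt_add_two_mul hs) hδ).mul_const (φ x)).sub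
      (convolutionExists_truncKernel hs hδ hφ hφs x)
  have hleft : Integrable fun h =>
      truncKernel ((d : ℝ) + 2 * s) δ h * (φ x - φ (x + h)) := by
    simpa only [truncKernel_neg, sub_neg_eq_add] using hright.comp_neg
  have hswap : ∫ h, truncKernel ((d : ℝ) + 2 * s) δ h * (φ x - φ (x + h)) =
      ∫ h, truncKernel ((d : ℝ) + 2 * s) δ h * (φ x - φ (x - h)) := by
    rw [← integral_neg_eq_self]
    simp only [truncKernel_neg, sub_eq_add_neg]
  calc fracLapTrunc d s φ x δ
      = (1 / 2) * ((∫ h, truncKernel ((d : ℝ) + 2 * s) δ h * (φ x - φ (x + h))) +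
          ∫ h, truncKernel ((d : ℝ) + 2 * s) δ h * (φ x - φ (x - h))) := by
        rw [hswap, fracLapTrunc_eq_integral_truncKernel]; ring
    _ = _ := by
        rw [← integral_add hleft hright, ← integral_const_mul]
        refine integral_congr_ae (.of_forall fun h => ?_)
        simp only [secondDiff]
        ring

lemma abs_fracLapTrunc_le_of_one_add_lt_norm {R : ℝ} (hs : 0 < s) (hφ : Integrable φ)
    (hR : ∀ y, φ y ≠ 0 → ‖y‖ ≤ R) {x : Ed d} (hx : R + 1 < ‖x‖) (δ : ℝ) :
    |fracLapTrunc d s φ x δ| ≤ (∫ y, |φ y|) *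
      (2 ^ ((d : ℝ) + 2 * s) * ((1 + R) ^ ((d : ℝ) + 2 * s) * polyDecay ((d : ℝ) + 2 * s) x)) := by
  have ha : 0 ≤ (d : ℝ) + 2 * s := by positivity
  have hφx : φ x = 0 := by
    by_contra h
    linarith [hR x h]
  rw [fracLapTrunc_eq_integral_truncKernel, ← integral_sub_left_eq_self _ volume x,
    ← integral_mul_const, ← Real.norm_eq_abs]
  refine norm_integral_le_of_norm_le (hφ.abs.mul_const _) (.of_forall fun y => ?_)
  simp only [hφx, sub_sub_cancel, zero_sub, norm_mul, norm_neg, Real.norm_eq_abs,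
    abs_of_nonneg (truncKernel_nonneg _), mul_comm _ |φ y|]
  by_cases hy : φ y = 0
  · simp [hy]
  have hyR : ‖y‖ ≤ R := hR y hy
  have hxy : 1 ≤ ‖x - y‖ := by linarith [norm_sub_norm_le x y]
  gcongr
  calc truncKernel ((d : ℝ) + 2 * s) δ (x - y) ≤ (‖x - y‖ ^ ((d : ℝ) + 2 * s))⁻¹ :=
        truncKernel_le_inv_norm_rpow _
    _ ≤ (1 + 1⁻¹) ^ ((d : ℝ) + 2 * s) * polyDecay ((d : ℝ) + 2 * s) (x - y) :=
        inv_norm_rpow_le_polyDecay ha one_pos hxy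
    _ ≤ _ := by
        rw [inv_one, one_add_one_eq_two]
        gcongr
        have hshift : ‖x - y - x‖ ≤ R := by rwa [sub_sub_cancel_left, norm_neg]
        simpa only [abs_of_nonneg ha] using polyDecay_le_of_norm_sub_le ((d : ℝ) + 2 * s) hshift

/-- The absolutely convergent form `∫ ‖h‖ ^ (-(d + 2s)) (2 φ x - φ (x + h) - φ (x - h)) / 2 dh` of
the principal value defining the fractional Laplacian of a test function, without the normalizing
constant. -/
noncomputable def symmFracLap (d : ℕ) (s : ℝ) (φ : Ed d → ℝ) (x : Ed d) : ℝ :=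
  ∫ h, (‖h‖ ^ ((d : ℝ) + 2 * s))⁻¹ * (secondDiff φ x h / 2)

variable [NeZero d]

lemma exists_integrable_bound_secondDiff (hs : s ∈ Ioo (0 : ℝ) 1) (hφ : ContDiff ℝ 2 φ)
    (hφs : HasCompactSupport φ) : ∃ G : Ed d → ℝ, Integrable G ∧
      ∀ x h, (‖h‖ ^ ((d : ℝ) + 2 * s))⁻¹ * |secondDiff φ x h / 2| ≤ G h := by
  obtain ⟨M, _, hbound⟩ := exists_abs_secondDiff_le hφ hφs
  refine ⟨fun h => M * (min 1 (‖h‖ ^ 2) * (‖h‖ ^ ((d : ℝ) + 2 * s))⁻¹),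
    (integrable_min_one_sq_mul_inv_norm_rpow (finrank_lt_add_two_mul hs.1) ?_).const_mul M,
    fun x h => ?_⟩
  · rw [finrank_euclideanSpace_fin]; linarith [hs.2]
  · have hhalf : |secondDiff φ x h / 2| ≤ M * min 1 (‖h‖ ^ 2) := by
      rw [abs_div, abs_two]
      linarith [hbound x h, abs_nonneg (secondDiff φ x h)]
    exact (mul_comm _ _).trans_le
      ((mul_le_mul_of_nonneg_right hhalf (by positivity)).trans_eq (mul_assoc _ _ _))

lemma tendsto_fracLapTrunc (hs : s ∈ Ioo (0 : ℝ) 1) (hφ : ContDiff ℝ 2 φ)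
    (hφs : HasCompactSupport φ) (x : Ed d) :
    Tendsto (fracLapTrunc d s φ x) (𝓝[>] 0) (𝓝 (symmFracLap d s φ x)) := by
  obtain ⟨G, hG, hbound⟩ := exists_integrable_bound_secondDiff hs hφ hφs
  have htrunc : (fun δ => ∫ h, truncKernel ((d : ℝ) + 2 * s) δ h * (secondDiff φ x h / 2))
      =ᶠ[𝓝[>] 0] fracLapTrunc d s φ x := by
    filter_upwards [self_mem_nhdsWithin] with δ hδ
    exact (fracLapTrunc_eq_integral_secondDiff hs.1 hδ hφ.continuous hφs x).symm
  refine Tendsto.congr' htrunc (tendsto_integral_filter_of_dominated_convergence G ?_ ?_ hG ?_)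
  · exact .of_forall fun δ => measurable_truncKernel.aestronglyMeasurable.mul
      ((continuous_secondDiff_right hφ.continuous x).div_const 2).aestronglyMeasurable
  · refine .of_forall fun δ => .of_forall fun h => le_trans ?_ (hbound x h)
    rw [norm_mul, Real.norm_of_nonneg (truncKernel_nonneg h), Real.norm_eq_abs]
    exact mul_le_mul_of_nonneg_right (truncKernel_le_inv_norm_rpow h) (abs_nonneg _)
  · filter_upwards [compl_mem_ae_iff.2 (measure_singleton (0 : Ed d))] with h hh
    exact (tendsto_truncKernel hh).mul_const _

lemma fracLap_eq_symmFracLap (hs : s ∈ Ioo (0 : ℝ) 1) (Cds : ℝ) (hφ : ContDiff ℝ 2 φ)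
    (hφs : HasCompactSupport φ) : fracLap d s Cds φ = fun x => Cds * symmFracLap d s φ x := by
  ext x
  rw [fracLap, (tendsto_fracLapTrunc hs hφ hφs x).limUnder_eq]

lemma continuous_symmFracLap (hs : s ∈ Ioo (0 : ℝ) 1) (hφ : ContDiff ℝ 2 φ)
    (hφs : HasCompactSupport φ) : Continuous (symmFracLap d s φ) := by
  obtain ⟨G, hG, hbound⟩ := exists_integrable_bound_secondDiff hs hφ hφs
  refine continuous_of_dominated (fun x => ?_) (fun x => .of_forall fun h => ?_) hG
    (.of_forall fun h => ?_)
  · exact (Measurable.aestronglyMeasurable (by fun_prop)).mul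
      ((continuous_secondDiff_right hφ.continuous x).div_const 2).aestronglyMeasurable
  · rw [norm_mul, Real.norm_of_nonneg (by positivity), Real.norm_eq_abs]
    exact hbound x h
  · exact ((continuous_secondDiff_left hφ.continuous h).div_const 2).const_mul _

lemma exists_abs_fracLapTrunc_le (hs : s ∈ Ioo (0 : ℝ) 1) (hφ : ContDiff ℝ 2 φ)
    (hφs : HasCompactSupport φ) :
    ∃ K : ℝ, ∀ δ > 0, ∀ x, |fracLapTrunc d s φ x δ| ≤ K := by
  obtain ⟨G, hG, hbound⟩ := exists_integrable_bound_secondDiff hs hφ hφs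
  refine ⟨∫ h, G h, fun δ hδ x => ?_⟩
  rw [fracLapTrunc_eq_integral_secondDiff hs.1 hδ hφ.continuous hφs, ← Real.norm_eq_abs]
  refine norm_integral_le_of_norm_le hG (.of_forall fun h => le_trans ?_ (hbound x h))
  rw [norm_mul, Real.norm_of_nonneg (truncKernel_nonneg h), Real.norm_eq_abs]
  exact mul_le_mul_of_nonneg_right (truncKernel_le_inv_norm_rpow h) (abs_nonneg _)

lemma exists_abs_fracLapTrunc_le_polyDecay (hs : s ∈ Ioo (0 : ℝ) 1) (hφ : ContDiff ℝ 2 φ)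
    (hφs : HasCompactSupport φ) : ∃ K : ℝ, ∀ δ > 0, ∀ x,
      |fracLapTrunc d s φ x δ| ≤ K * polyDecay ((d : ℝ) + 2 * s) x := by
  have ha : 0 ≤ (d : ℝ) + 2 * s := by have := hs.1; positivity
  obtain ⟨K, hK⟩ := exists_abs_fracLapTrunc_le hs hφ hφs
  obtain ⟨R, _, hR⟩ := hφs.isCompact.isBounded.subset_closedBall_lt 0 0
  have hφi := hφ.continuous.integrable_of_hasCompactSupport hφs (μ := volume)
  refine ⟨max (K * (1 + (R + 1)) ^ ((d : ℝ) + 2 * s)) ((∫ y, |φ y|) *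
    (2 ^ ((d : ℝ) + 2 * s) * (1 + R) ^ ((d : ℝ) + 2 * s))), fun δ hδ x => ?_⟩
  have hdecay := (polyDecay_pos ((d : ℝ) + 2 * s) x).le
  rcases le_or_gt ‖x‖ (R + 1) with hx | hx
  · have hK0 : 0 ≤ K := (abs_nonneg _).trans (hK δ hδ x)
    have hone : 1 ≤ (1 + (R + 1)) ^ ((d : ℝ) + 2 * s) * polyDecay ((d : ℝ) + 2 * s) x := by
      have := polyDecay_le_of_norm_sub_le ((d : ℝ) + 2 * s) (x := 0) (y := x) (by simpa using hx)
      simpa [polyDecay, abs_of_nonneg ha] using this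
    calc |fracLapTrunc d s φ x δ| ≤ K * 1 := by simpa using hK δ hδ x
      _ ≤ K * (1 + (R + 1)) ^ ((d : ℝ) + 2 * s) * polyDecay ((d : ℝ) + 2 * s) x := by
        rw [mul_assoc]; gcongr
      _ ≤ _ := by gcongr; exact le_max_left _ _
  · refine (abs_fracLapTrunc_le_of_one_add_lt_norm hs.1 hφi (fun y hy => ?_) hx δ).trans ?_
    · simpa using hR (subset_tsupport φ hy)
    · rw [← mul_assoc, ← mul_assoc, mul_assoc (∫ y, |φ y|)]
      gcongr
      exact le_max_right _ _

lemma exists_abs_symmFracLap_le_polyDecay (hs : s ∈ Ioo (0 : ℝ) 1) (hφ : ContDiff ℝ 2 φ)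
    (hφs : HasCompactSupport φ) :
    ∃ K : ℝ, ∀ x, |symmFracLap d s φ x| ≤ K * polyDecay ((d : ℝ) + 2 * s) x := by
  obtain ⟨K, hK⟩ := exists_abs_fracLapTrunc_le_polyDecay hs hφ hφs
  refine ⟨K, fun x => le_of_tendsto (tendsto_fracLapTrunc hs hφ hφs x).abs ?_⟩
  filter_upwards [self_mem_nhdsWithin] with δ hδ using hK δ hδ x

end FracLap

lemma exists_abs_le_polyDecay_of_hasCompactSupport {E : Type*} [NormedAddCommGroup E]
    {φ : E → ℝ} (a : ℝ) (hφ : Continuous φ) (hφs : HasCompactSupport φ) :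
    ∃ C : ℝ, ∀ x, |φ x| ≤ C * polyDecay a x := by
  have hquot : Continuous fun x => φ x / polyDecay a x :=
    hφ.div (continuous_polyDecay a) fun x => (polyDecay_pos a x).ne'
  obtain ⟨C, hC⟩ := HasCompactSupport.exists_bound_of_continuous
    (hφs.mono fun x hx h => hx (by simp [h])) hquot
  refine ⟨C, fun x => ?_⟩
  rw [← div_le_iff₀ (polyDecay_pos a x)]
  simpa [abs_div, abs_of_pos (polyDecay_pos a x)] using hC x

section FracLapConvolution

variable {d : ℕ} [NeZero d] {s Cds : ℝ} {ψ f v V : Ed d → ℝ}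

lemma fracLapTrunc_convolution (hs : s ∈ Ioo (0 : ℝ) 1) (hψ : ContDiff ℝ 2 ψ)
    (hψs : HasCompactSupport ψ) (hf : Integrable fun x => f x * polyDecay ((d : ℝ) + 2 * s) x)
    {δ : ℝ} (hδ : 0 < δ) (x : Ed d) :
    fracLapTrunc d s (ψ ⋆ f) x δ = ((fun y => fracLapTrunc d s ψ y δ) ⋆ f) x := by
  set k : Ed d → ℝ := truncKernel ((d : ℝ) + 2 * s) δ
  set c : ℝ := ∫ h, k h
  have ha : 0 ≤ (d : ℝ) + 2 * s := by have := hs.1; positivity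
  have hk := measurable_truncKernel.aestronglyMeasurable (f := k) (μ := volume)
  have hkle := abs_truncKernel_le_polyDecay (E := Ed d) ha hδ
  have hTψ : ∀ y, fracLapTrunc d s ψ y δ = c * ψ y - (k ⋆ ψ) y := fun y =>
    fracLapTrunc_eq_sub_convolution hs.1 hδ
      (convolutionExists_truncKernel hs.1 hδ hψ.continuous hψs y)
  have hkψ : ConvolutionExists (k ⋆ ψ) f (ContinuousLinearMap.lsmul ℝ ℝ) := by
    obtain ⟨C, hC⟩ :=
      exists_abs_le_polyDecay_of_hasCompactSupport ((d : ℝ) + 2 * s) hψ.continuous hψs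
    obtain ⟨K, hK⟩ := exists_abs_fracLapTrunc_le_polyDecay hs hψ hψs
    refine convolutionExists_of_abs_le_polyDecay (C := |c| * C + K)
      (continuous_truncKernel_convolution hs.1 hδ hψ.continuous hψs).aestronglyMeasurable
      (fun y => ?_) hf
    calc |(k ⋆ ψ) y| = |c * ψ y - fracLapTrunc d s ψ y δ| := by rw [hTψ, sub_sub_cancel]
      _ ≤ |c| * |ψ y| + |fracLapTrunc d s ψ y δ| := (abs_sub _ _).trans_eq (by rw [abs_mul])
      _ ≤ |c| * (C * polyDecay _ y) + K * polyDecay _ y := by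
        gcongr
        exacts [hC y, hK δ hδ y]
      _ = _ := by ring
  have hψf := hψs.convolutionExists_left (ContinuousLinearMap.lsmul ℝ ℝ) hψ.continuous
    (locallyIntegrable_of_mul_polyDecay hf)
  calc fracLapTrunc d s (ψ ⋆ f) x δ = c * (ψ ⋆ f) x - (k ⋆ ψ ⋆ f) x :=
        fracLapTrunc_eq_sub_convolution hs.1 hδ (convolutionExists_of_abs_le_polyDecay hk hkle
          (integrable_convolution_mul_polyDecay hψ.continuous hψs hf) x)
    _ = c * (ψ ⋆ f) x - ((k ⋆ ψ) ⋆ f) x := by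
        rw [convolution_assoc_of_abs_le_polyDecay hψ.continuous hψs hk hkle hf]
    _ = ∫ t, (c * (ψ t * f (x - t)) - (k ⋆ ψ) t * f (x - t)) := by
        rw [convolution_apply, convolution_apply, ← integral_const_mul]
        exact (integral_sub ((hψf x).const_mul c) (hkψ x)).symm
    _ = ((fun y => fracLapTrunc d s ψ y δ) ⋆ f) x := by
        simp only [convolution_apply _ f, hTψ, sub_mul, mul_assoc]

lemma tendsto_fracLapTrunc_convolution (hs : s ∈ Ioo (0 : ℝ) 1) (hψ : ContDiff ℝ 2 ψ)
    (hψs : HasCompactSupport ψ) (hf : Integrable fun x => f x * polyDecay ((d : ℝ) + 2 * s) x)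
    (x : Ed d) :
    Tendsto (fracLapTrunc d s (ψ ⋆ f) x) (𝓝[>] 0) (𝓝 ((symmFracLap d s ψ ⋆ f) x)) := by
  obtain ⟨K, hK⟩ := exists_abs_fracLapTrunc_le_polyDecay hs hψ hψs
  have hfm := (locallyIntegrable_of_mul_polyDecay hf).aestronglyMeasurable
  have hdom : Integrable fun t => ‖K * polyDecay ((d : ℝ) + 2 * s) t * f (x - t)‖ :=
    (convolutionExists_of_abs_le_polyDecay (C := |K|)
      ((continuous_polyDecay _).const_mul K).aestronglyMeasurable
      (fun y => by rw [abs_mul, abs_of_pos (polyDecay_pos _ y)]) hf x).norm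
  have htrunc : (fun δ => ((fun y => fracLapTrunc d s ψ y δ) ⋆ f) x)
      =ᶠ[𝓝[>] 0] fracLapTrunc d s (ψ ⋆ f) x := by
    filter_upwards [self_mem_nhdsWithin] with δ hδ
    exact (fracLapTrunc_convolution hs hψ hψs hf hδ x).symm
  refine Tendsto.congr' htrunc (tendsto_integral_filter_of_dominated_convergence _ ?_ ?_ hdom ?_)
  · filter_upwards [self_mem_nhdsWithin] with δ hδ
    exact (continuous_fracLapTrunc hs.1 hδ hψ.continuous hψs).aestronglyMeasurable.smul
      (hfm.comp_quasiMeasurePreserving (quasiMeasurePreserving_sub_left _ x))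
  · filter_upwards [self_mem_nhdsWithin] with δ hδ
    refine .of_forall fun t => ?_
    rw [ContinuousLinearMap.lsmul_apply, smul_eq_mul, norm_mul, norm_mul _ (f _)]
    gcongr
    exact (hK δ hδ t).trans (le_abs_self _)
  · exact .of_forall fun t => (tendsto_fracLapTrunc hs hψ hψs t).mul_const _

lemma fracLap_convolution (hs : s ∈ Ioo (0 : ℝ) 1) (Cds : ℝ) (hψ : ContDiff ℝ 2 ψ)
    (hψs : HasCompactSupport ψ) (hf : Integrable fun x => f x * polyDecay ((d : ℝ) + 2 * s) x) :
    fracLap d s Cds (ψ ⋆ f) = fracLap d s Cds ψ ⋆ f := by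
  ext x
  rw [fracLap, (tendsto_fracLapTrunc_convolution hs hψ hψs hf x).limUnder_eq,
    fracLap_eq_symmFracLap hs Cds hψ hψs]
  simp only [convolution_apply, mul_assoc, integral_const_mul]

lemma IsDistFracLap.fracLap_convolution (hvV : IsDistFracLap d s Cds v V)
    (hs : s ∈ Ioo (0 : ℝ) 1) (hψ : ContDiff ℝ (⊤ : ℕ∞) ψ) (hψs : HasCompactSupport ψ)
    (hv : Integrable fun x => v x * polyDecay ((d : ℝ) + 2 * s) x) :
    fracLap d s Cds (ψ ⋆ v) = ψ ⋆ V := by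
  ext x
  have htest := hvV (fun z => ψ (x - z)) (hψ.comp (contDiff_const.sub contDiff_id))
    (hψs.comp_homeomorph (Homeomorph.subLeft x))
  simp only [fracLap_comp_sub_left] at htest
  rw [_root_.fracLap_convolution hs Cds (hψ.of_le (by norm_cast)) hψs hv,
    convolution_apply_swap, convolution_apply_swap]
  simpa only [mul_comm] using htest

lemma IsDistFracLap.convolution (hvV : IsDistFracLap d s Cds v V)
    (hs : s ∈ Ioo (0 : ℝ) 1) (hψ : ContDiff ℝ (⊤ : ℕ∞) ψ) (hψs : HasCompactSupport ψ)
    (hv : Integrable fun x => v x * polyDecay ((d : ℝ) + 2 * s) x)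
    (hV : Integrable fun x => V x * polyDecay ((d : ℝ) + 2 * s) x) :
    IsDistFracLap d s Cds (ψ ⋆ v) (ψ ⋆ V) := by
  intro φ hφ hφs
  have hφ2 : ContDiff ℝ 2 φ := hφ.of_le (by norm_cast)
  set ψ' : Ed d → ℝ := fun z => ψ (-z)
  have hψ' : ContDiff ℝ (⊤ : ℕ∞) ψ' := hψ.comp contDiff_neg
  have hψ's : HasCompactSupport ψ' := hψs.comp_homeomorph (Homeomorph.neg _)
  obtain ⟨K, hK⟩ := exists_abs_symmFracLap_le_polyDecay hs hφ2 hφs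
  obtain ⟨C, hC⟩ :=
    exists_abs_le_polyDecay_of_hasCompactSupport ((d : ℝ) + 2 * s) hφ.continuous hφs
  have hψ'decay : Integrable fun x => ψ' x * polyDecay ((d : ℝ) + 2 * s) x :=
    (hψ'.continuous.mul (continuous_polyDecay _)).integrable_of_hasCompactSupport hψ's.mul_right
  have hcomm : ψ' ⋆ fracLap d s Cds φ = fracLap d s Cds (ψ' ⋆ φ) := by
    rw [convolution_comm ψ', convolution_comm ψ' φ,
      _root_.fracLap_convolution hs Cds hφ2 hφs hψ'decay]
  calc ∫ x, (ψ ⋆ v) x * fracLap d s Cds φ x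
      = ∫ x, v x * (ψ' ⋆ fracLap d s Cds φ) x := by
        rw [fracLap_eq_symmFracLap hs Cds hφ2 hφs]
        refine integral_convolution_mul_eq_integral_mul_convolution (C := |Cds| * K)
          hψ.continuous hψs
          ((continuous_symmFracLap hs hφ2 hφs).const_mul Cds).aestronglyMeasurable
          (fun x => ?_) hv
        rw [abs_mul, mul_assoc]
        gcongr
        exact hK x
    _ = ∫ x, v x * fracLap d s Cds (ψ' ⋆ φ) x := by rw [hcomm]
    _ = ∫ x, V x * (ψ' ⋆ φ) x := hvV _
        (hψ's.contDiff_convolution_left _ hψ' hφ.continuous.locallyIntegrable)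
        (hψ's.convolution _ hφs)
    _ = ∫ x, (ψ ⋆ V) x * φ x :=
        (integral_convolution_mul_eq_integral_mul_convolution hψ.continuous hψs
          hφ.continuous.aestronglyMeasurable hC hV).symm

end FracLapConvolution

section SchurTest

variable {α β : Type*} [MeasurableSpace α] [MeasurableSpace β] {μ : Measure α} {ν : Measure β}
  {q : ℝ}

lemma rpow_lintegral_mul_le {κ f h : β → ℝ≥0∞} (hq : 1 ≤ q) (hκ : AEMeasurable κ ν)
    (hf : AEMeasurable f ν) (hh : AEMeasurable h ν) (hh₀ : ∀ y, h y ≠ 0) (hh_top : ∀ y, h y ≠ ⊤) :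
    (∫⁻ y, κ y * f y ∂ν) ^ q ≤
      (∫⁻ y, κ y * h y ∂ν) ^ (q - 1) * ∫⁻ y, κ y * (f y ^ q * h y ^ (1 - q)) ∂ν := by
  have hq₀ : 0 < q := by linarith
  have hq' : 0 ≤ 1 - q⁻¹ := sub_nonneg.2 (inv_le_one_of_one_le₀ hq)
  have hexp : 1 - q⁻¹ + (1 - q) * q⁻¹ = 0 := by field_simp; ring
  have hsplit : ∀ y, κ y * f y =
      (κ y * h y) ^ (1 - q⁻¹) * (κ y * (f y ^ q * h y ^ (1 - q))) ^ q⁻¹ := fun y => by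
    rw [ENNReal.mul_rpow_of_nonneg _ _ hq', ENNReal.mul_rpow_of_nonneg _ _ (by positivity),
      ENNReal.mul_rpow_of_nonneg _ _ (by positivity), ENNReal.rpow_rpow_inv hq₀.ne',
      mul_mul_mul_comm, ← ENNReal.rpow_add_of_nonneg _ _ hq' (by positivity), sub_add_cancel,
      ENNReal.rpow_one, mul_left_comm (h y ^ _), ← ENNReal.rpow_mul,
      ← ENNReal.rpow_add _ _ (hh₀ y) (hh_top y), hexp, ENNReal.rpow_zero, mul_one]
  calc (∫⁻ y, κ y * f y ∂ν) ^ q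
      ≤ ((∫⁻ y, κ y * h y ∂ν) ^ (1 - q⁻¹) *
          (∫⁻ y, κ y * (f y ^ q * h y ^ (1 - q)) ∂ν) ^ q⁻¹) ^ q := by
        simp only [hsplit]
        gcongr
        exact ENNReal.lintegral_mul_norm_pow_le (hκ.mul hh)
          (hκ.mul ((hf.pow_const q).mul (hh.pow_const (1 - q)))) hq' (by positivity)
          (sub_add_cancel _ _)
    _ = _ := by
        rw [ENNReal.mul_rpow_of_nonneg _ _ hq₀.le, ENNReal.rpow_inv_rpow hq₀.ne',
          ← ENNReal.rpow_mul, sub_mul, one_mul, inv_mul_cancel₀ hq₀.ne']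

lemma rpow_lintegral_mul_mul_le_of_lintegral_mul_le {κ f h : β → ℝ≥0∞} {A g : ℝ≥0∞} (hq : 1 ≤ q)
    (hκ : AEMeasurable κ ν) (hf : AEMeasurable f ν) (hh : AEMeasurable h ν) (hh₀ : ∀ y, h y ≠ 0)
    (hh_top : ∀ y, h y ≠ ⊤) (hrow : ∫⁻ y, κ y * h y ∂ν ≤ A * g) (u : ℝ≥0∞) :
    (∫⁻ y, κ y * f y ∂ν) ^ q * u ≤
      A ^ (q - 1) * ∫⁻ y, κ y * (g ^ (q - 1) * u) * (f y ^ q * h y ^ (1 - q)) ∂ν := by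
  have hq' : 0 ≤ q - 1 := sub_nonneg.2 hq
  calc (∫⁻ y, κ y * f y ∂ν) ^ q * u
      ≤ (A * g) ^ (q - 1) * (∫⁻ y, κ y * (f y ^ q * h y ^ (1 - q)) ∂ν) * u := by
        gcongr
        exact (rpow_lintegral_mul_le hq hκ hf hh hh₀ hh_top).trans (by gcongr)
    _ = A ^ (q - 1) * ((g ^ (q - 1) * u) * ∫⁻ y, κ y * (f y ^ q * h y ^ (1 - q)) ∂ν) := by
        rw [ENNReal.mul_rpow_of_nonneg _ _ hq']; ring
    _ = _ := by
        rw [← lintegral_const_mul'' _ (by fun_prop)]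
        simp only [mul_left_comm, mul_assoc]

/- Schur's test with weights: Hölder's inequality against the test function `h` on the rows, then
Tonelli and the column bound. -/
theorem lintegral_rpow_lintegral_mul_le [SFinite μ] [SFinite ν] {κ : α → β → ℝ≥0∞}
    {f h v : β → ℝ≥0∞} {g u : α → ℝ≥0∞} {A B : ℝ≥0∞} (hq : 1 ≤ q) (hA : A ≠ ⊤) (hB : B ≠ ⊤)
    (hκ : Measurable (Function.uncurry κ)) (hf : AEMeasurable f ν) (hh : AEMeasurable h ν)
    (hh₀ : ∀ y, h y ≠ 0) (hh_top : ∀ y, h y ≠ ⊤) (hg : AEMeasurable g μ) (hu : AEMeasurable u μ)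
    (hrow : ∀ᵐ x ∂μ, ∫⁻ y, κ x y * h y ∂ν ≤ A * g x)
    (hcol : ∀ᵐ y ∂ν, ∫⁻ x, κ x y * (g x ^ (q - 1) * u x) ∂μ ≤ B * (h y ^ (q - 1) * v y)) :
    ∫⁻ x, (∫⁻ y, κ x y * f y ∂ν) ^ q * u x ∂μ ≤ A ^ (q - 1) * B * ∫⁻ y, f y ^ q * v y ∂ν := by
  have hq' : 0 ≤ q - 1 := sub_nonneg.2 hq
  have hfh : AEMeasurable (fun y => f y ^ q * h y ^ (1 - q)) ν :=
    (hf.pow_const q).mul (hh.pow_const (1 - q))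
  have hgu : AEMeasurable (fun x => g x ^ (q - 1) * u x) μ := (hg.pow_const _).mul hu
  have hrow' : ∀ᵐ x ∂μ, (∫⁻ y, κ x y * f y ∂ν) ^ q * u x ≤ A ^ (q - 1) *
      ∫⁻ y, κ x y * (g x ^ (q - 1) * u x) * (f y ^ q * h y ^ (1 - q)) ∂ν :=
    hrow.mono fun x hx => rpow_lintegral_mul_mul_le_of_lintegral_mul_le hq
      hκ.of_uncurry_left.aemeasurable hf hh hh₀ hh_top hx (u x)
  have hcol' : ∀ᵐ y ∂ν, (∫⁻ x, κ x y * (g x ^ (q - 1) * u x) ∂μ) * (f y ^ q * h y ^ (1 - q)) ≤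
      B * (f y ^ q * v y) := by
    filter_upwards [hcol] with y hy
    have hpow : h y ^ (q - 1) * h y ^ (1 - q) = 1 := by
      rw [← ENNReal.rpow_add _ _ (hh₀ y) (hh_top y), sub_add_sub_cancel, sub_self,
        ENNReal.rpow_zero]
    calc (∫⁻ x, κ x y * (g x ^ (q - 1) * u x) ∂μ) * (f y ^ q * h y ^ (1 - q))
        ≤ B * (h y ^ (q - 1) * v y) * (f y ^ q * h y ^ (1 - q)) := by gcongr
      _ = B * (f y ^ q * v y) * (h y ^ (q - 1) * h y ^ (1 - q)) := by ring
      _ = _ := by rw [hpow, mul_one]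
  calc ∫⁻ x, (∫⁻ y, κ x y * f y ∂ν) ^ q * u x ∂μ
      ≤ A ^ (q - 1) *
          ∫⁻ x, ∫⁻ y, κ x y * (g x ^ (q - 1) * u x) * (f y ^ q * h y ^ (1 - q)) ∂ν ∂μ := by
        rw [← lintegral_const_mul' _ _ (ENNReal.rpow_ne_top_of_nonneg hq' hA)]
        exact lintegral_mono_ae hrow'
    _ = A ^ (q - 1) *
          ∫⁻ y, (∫⁻ x, κ x y * (g x ^ (q - 1) * u x) ∂μ) * (f y ^ q * h y ^ (1 - q)) ∂ν := by
        rw [lintegral_lintegral_swap ((hκ.aemeasurable.mul hgu.comp_fst).mul hfh.comp_snd)]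
        congr! 3 with y
        exact lintegral_mul_const'' _ (hκ.of_uncurry_right.aemeasurable.mul hgu)
    _ ≤ A ^ (q - 1) * (B * ∫⁻ y, f y ^ q * v y ∂ν) := by
        rw [← lintegral_const_mul' _ _ hB]
        exact mul_le_mul_right (lintegral_mono_ae hcol') _
    _ = _ := (mul_assoc _ _ _).symm

end SchurTest

section LocalA1

/-- The local Muckenhoupt `A₁` condition: the average of the weight `w` over a ball is at most a
constant times its value at the centre, with a constant that is uniform over balls of bounded
radius. A two-power weight with different exponents at `0` and at `∞` satisfies this even when it
violates the global `A₁` condition. -/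
def IsLocalA1 {E : Type*} [PseudoMetricSpace E] [MeasurableSpace E] (μ : Measure E)
    (w : E → ℝ≥0∞) : Prop :=
  ∀ r₀ > (0 : ℝ), ∃ K ≠ ⊤, ∀ r ∈ Ioc 0 r₀, ∀ᵐ x ∂μ,
    ∫⁻ y in closedBall x r, w y ∂μ ≤ K * μ (closedBall x r) * w x

section Metric

variable {E : Type*} [PseudoMetricSpace E] [MeasurableSpace E] {μ : Measure E} {w w' : E → ℝ≥0∞}

lemma IsLocalA1.of_le_of_le (hw : IsLocalA1 μ w) {A B : ℝ≥0∞} (hA : A ≠ ⊤) (hB : B ≠ ⊤)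
    (hle : ∀ᵐ x ∂μ, w' x ≤ A * w x) (hge : ∀ᵐ x ∂μ, w x ≤ B * w' x) : IsLocalA1 μ w' := by
  intro r₀ hr₀
  obtain ⟨K, hK, hball⟩ := hw r₀ hr₀
  refine ⟨A * K * B, by finiteness, fun r hr => ?_⟩
  filter_upwards [hball r hr, hge] with x hx hgex
  calc ∫⁻ y in closedBall x r, w' y ∂μ ≤ ∫⁻ y in closedBall x r, A * w y ∂μ :=
        lintegral_mono_ae (ae_restrict_of_ae hle)
    _ = A * ∫⁻ y in closedBall x r, w y ∂μ := lintegral_const_mul' _ _ hA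
    _ ≤ A * (K * μ (closedBall x r) * (B * w' x)) := by gcongr; exact hx.trans (by gcongr)
    _ = _ := by ring

lemma IsLocalA1.mul_of_slowlyVarying [OpensMeasurableSpace E] (hw : IsLocalA1 μ w)
    {b : E → ℝ≥0∞}
    (hb : ∀ r₀ > (0 : ℝ), ∃ L ≠ ⊤, ∀ x y, dist y x ≤ r₀ → b y ≤ L * b x)
    (hb_top : ∀ x, b x ≠ ⊤) : IsLocalA1 μ fun x => w x * b x := by
  intro r₀ hr₀
  obtain ⟨K, hK, hball⟩ := hw r₀ hr₀
  obtain ⟨L, hL, hvar⟩ := hb r₀ hr₀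
  refine ⟨K * L, by finiteness, fun r hr => ?_⟩
  filter_upwards [hball r hr] with x hx
  calc ∫⁻ y in closedBall x r, w y * b y ∂μ ≤ ∫⁻ y in closedBall x r, w y * (L * b x) ∂μ :=
        setLIntegral_mono' measurableSet_closedBall fun y hy => by
          gcongr; exact hvar x y (hy.trans hr.2)
    _ = (∫⁻ y in closedBall x r, w y ∂μ) * (L * b x) :=
        lintegral_mul_const' _ _ (ENNReal.mul_ne_top hL (hb_top x))
    _ ≤ K * μ (closedBall x r) * w x * (L * b x) := by gcongr
    _ = _ := by ring

end Metric

lemma half_rpow_neg {a : ℝ} (ha : 0 ≤ a) (b : ℝ) : (a / 2) ^ (-b) = 2 ^ b * a ^ (-b) := by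
  rw [Real.div_rpow ha zero_le_two, Real.rpow_neg zero_le_two, div_inv_eq_mul, mul_comm]

lemma setIntegral_closedBall_norm_rpow_neg_le_of_two_mul_le {E : Type*}
    [NormedAddCommGroup E] [ProperSpace E] [MeasurableSpace E] {μ : Measure E}
    [IsFiniteMeasureOnCompacts μ] {b : ℝ} (hb : 0 ≤ b) {x : E} {r : ℝ} (hr : 0 < r)
    (hx : 2 * r ≤ ‖x‖) :
    ∫ y in closedBall x r, ‖y‖ ^ (-b) ∂μ ≤ 2 ^ b * μ.real (closedBall x r) * ‖x‖ ^ (-b) := by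
  have hle : ∀ y ∈ closedBall x r, ‖‖y‖ ^ (-b)‖ ≤ 2 ^ b * ‖x‖ ^ (-b) := fun y hy => by
    rw [Real.norm_of_nonneg (by positivity), ← half_rpow_neg (norm_nonneg x)]
    refine Real.rpow_le_rpow_of_nonpos (by linarith) ?_ (neg_nonpos.2 hb)
    have := norm_sub_norm_le x y
    rw [mem_closedBall, dist_eq_norm, norm_sub_rev] at hy
    linarith
  refine (le_abs_self _).trans ((norm_setIntegral_le_of_norm_le_const
    (isCompact_closedBall x r).measure_lt_top hle).trans_eq (by ring))

variable {E : Type*} [NormedAddCommGroup E] [NormedSpace ℝ E] [FiniteDimensional ℝ E]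
  [MeasurableSpace E] [BorelSpace E] {μ : Measure E} [μ.IsAddHaarMeasure]

lemma setIntegral_closedBall_norm_rpow_neg (b : ℝ) {r : ℝ} (hr : 0 < r) :
    ∫ y in closedBall (0 : E) r, ‖y‖ ^ (-b) ∂μ =
      r ^ (Module.finrank ℝ E - b) * ∫ y in closedBall (0 : E) 1, ‖y‖ ^ (-b) ∂μ := by
  have hscale := Measure.setIntegral_comp_smul_of_pos μ (fun y : E => ‖y‖ ^ (-b))
    (closedBall 0 1) hr
  simp only [norm_smul, Real.norm_of_nonneg hr.le, Real.mul_rpow hr.le (norm_nonneg _),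
    integral_const_mul, _root_.smul_closedBall r (0 : E) zero_le_one,
    smul_zero, mul_one, smul_eq_mul] at hscale
  rw [sub_eq_add_neg, Real.rpow_add hr, Real.rpow_natCast, mul_assoc, hscale,
    mul_inv_cancel_left₀ (by positivity)]

lemma setIntegral_closedBall_norm_rpow_neg_le_of_le_two_mul [Nontrivial E] {b : ℝ} (hb₀ : 0 ≤ b)
    (hb : b < Module.finrank ℝ E) {x : E} (hx : x ≠ 0) {r : ℝ} (hxr : ‖x‖ ≤ 2 * r) :
    ∫ y in closedBall x r, ‖y‖ ^ (-b) ∂μ ≤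
      3 ^ (Module.finrank ℝ E - b) * (∫ y in closedBall (0 : E) 1, ‖y‖ ^ (-b) ∂μ) *
        (2 ^ b * r ^ Module.finrank ℝ E * ‖x‖ ^ (-b)) := by
  set J := ∫ y in closedBall (0 : E) 1, ‖y‖ ^ (-b) ∂μ
  have hxpos : 0 < ‖x‖ := norm_pos_iff.2 hx
  have hr : 0 < r := by linarith
  have : 0 ≤ J := integral_nonneg fun y => by positivity
  have hrb : r ^ (-b) ≤ 2 ^ b * ‖x‖ ^ (-b) := by
    rw [← half_rpow_neg hxpos.le]
    exact Real.rpow_le_rpow_of_nonpos (by positivity) (by linarith) (neg_nonpos.2 hb₀)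
  calc ∫ y in closedBall x r, ‖y‖ ^ (-b) ∂μ ≤ ∫ y in closedBall 0 (3 * r), ‖y‖ ^ (-b) ∂μ :=
        setIntegral_mono_set ((locallyIntegrable_norm_rpow_neg hb).integrableOn_isCompact
          (isCompact_closedBall _ _)) (.of_forall fun y => by positivity)
          (closedBall_subset_closedBall' (by rw [dist_zero_right]; linarith)).eventuallyLE
    _ = (3 * r) ^ (Module.finrank ℝ E - b) * J :=
        setIntegral_closedBall_norm_rpow_neg b (by positivity)
    _ = 3 ^ (Module.finrank ℝ E - b) * J * (r ^ Module.finrank ℝ E * r ^ (-b)) := by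
        rw [Real.mul_rpow zero_le_three hr.le, sub_eq_add_neg _ b, Real.rpow_add hr,
          Real.rpow_natCast]
        ring
    _ ≤ 3 ^ (Module.finrank ℝ E - b) * J *
          (r ^ Module.finrank ℝ E * (2 ^ b * ‖x‖ ^ (-b))) := by gcongr
    _ = _ := by ring

theorem isLocalA1_norm_rpow_neg [Nontrivial E] {b : ℝ} (hb₀ : 0 ≤ b)
    (hb : b < Module.finrank ℝ E) : IsLocalA1 μ fun x : E => ENNReal.ofReal (‖x‖ ^ (-b)) := by
  intro r₀ _
  set J := ∫ y in closedBall (0 : E) 1, ‖y‖ ^ (-b) ∂μ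
  have : 0 ≤ J := integral_nonneg fun y => by positivity
  set m := μ.real (ball (0 : E) 1)
  have hm : 0 < m := ENNReal.toReal_pos (measure_ball_pos μ 0 one_pos).ne' measure_ball_lt_top.ne
  set K : ℝ := 2 ^ b * (1 + 3 ^ (Module.finrank ℝ E - b) * J / m)
  refine ⟨ENNReal.ofReal K, ENNReal.ofReal_ne_top, fun r hr => ?_⟩
  filter_upwards [Measure.ae_ne μ 0] with x hx
  have hball : μ.real (closedBall x r) = r ^ Module.finrank ℝ E * m :=
    Measure.addHaar_real_closedBall μ x hr.1.le
  rw [← ofReal_integral_eq_lintegral_ofReal ((locallyIntegrable_norm_rpow_neg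
      hb).integrableOn_isCompact (isCompact_closedBall _ _)) (.of_forall fun y => by positivity),
    ← ofReal_measureReal (isCompact_closedBall x r).measure_lt_top.ne,
    ← ENNReal.ofReal_mul (by positivity), ← ENNReal.ofReal_mul (by positivity)]
  refine ENNReal.ofReal_le_ofReal ?_
  rcases le_total (2 * r) ‖x‖ with hfar | hnear
  · refine (setIntegral_closedBall_norm_rpow_neg_le_of_two_mul_le hb₀ hr.1 hfar).trans ?_
    gcongr
    exact le_mul_of_one_le_right (by positivity) (le_add_of_nonneg_right (by positivity))
  · refine (setIntegral_closedBall_norm_rpow_neg_le_of_le_two_mul hb₀ hb hx hnear).trans ?_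
    rw [hball]
    have h₁ : 0 ≤ 2 ^ b * r ^ Module.finrank ℝ E * m * ‖x‖ ^ (-b) := by
      have := hr.1
      positivity
    calc _ = 2 ^ b * (3 ^ (Module.finrank ℝ E - b) * J / m) * (r ^ Module.finrank ℝ E * m) *
          ‖x‖ ^ (-b) := by simp only [J]; field_simp
      _ ≤ _ := by simp only [K]; linarith

end LocalA1

section Mollifier

variable {d : ℕ} {η f : Ed d → ℝ} {ε : ℝ}

/-- The rescaled mollifier `η_ε = ε^{-d} η(·/ε)`; mollification is convolution with it. -/
noncomputable def scaledKernel (d : ℕ) (η : Ed d → ℝ) (ε : ℝ) (z : Ed d) : ℝ :=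
  ε ^ (-(d : ℝ)) * η (ε⁻¹ • z)

lemma mollify_eq_convolution (d : ℕ) (η : Ed d → ℝ) (ε : ℝ) (f : Ed d → ℝ) :
    mollify d η ε f = scaledKernel d η ε ⋆ f :=
  funext fun x => (convolution_apply_swap (scaledKernel d η ε) f x).symm

namespace IsMollifier

lemma eq_zero_of_one_lt_norm (hη : IsMollifier d η) {z : Ed d} (hz : 1 < ‖z‖) : η z = 0 :=
  image_eq_zero_of_notMem_tsupport fun h => hz.not_ge (mem_closedBall_zero_iff.1 (hη.2.2.1 h))

lemma hasCompactSupport (hη : IsMollifier d η) : HasCompactSupport η :=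
  (isCompact_closedBall 0 1).of_isClosed_subset (isClosed_tsupport η) hη.2.2.1

lemma contDiff_scaledKernel (hη : IsMollifier d η) (ε : ℝ) :
    ContDiff ℝ (⊤ : ℕ∞) (scaledKernel d η ε) :=
  contDiff_const.mul (hη.1.comp (contDiff_const_smul ε⁻¹))

lemma scaledKernel_nonneg (hη : IsMollifier d η) (hε : 0 < ε) (z : Ed d) :
    0 ≤ scaledKernel d η ε z :=
  mul_nonneg (by positivity) (hη.2.1 _)

lemma scaledKernel_eq_zero (hη : IsMollifier d η) (hε : 0 < ε) {z : Ed d} (hz : ε < ‖z‖) :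
    scaledKernel d η ε z = 0 := by
  rw [scaledKernel, hη.eq_zero_of_one_lt_norm, mul_zero]
  rwa [norm_smul, norm_inv, Real.norm_of_nonneg hε.le, ← div_eq_inv_mul, one_lt_div hε]

lemma hasCompactSupport_scaledKernel (hη : IsMollifier d η) (hε : 0 < ε) :
    HasCompactSupport (scaledKernel d η ε) :=
  (hη.hasCompactSupport.comp_smul (inv_ne_zero hε.ne')).mul_left

lemma integral_scaledKernel (hη : IsMollifier d η) (hε : 0 < ε) :
    ∫ z, scaledKernel d η ε z = 1 := by
  simp only [scaledKernel]
  rw [integral_const_mul, Measure.integral_comp_inv_smul_of_nonneg _ _ hε.le, hη.2.2.2,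
    finrank_euclideanSpace_fin, Real.rpow_neg hε.le, Real.rpow_natCast, smul_eq_mul, mul_one,
    inv_mul_cancel₀ (by positivity)]

lemma lintegral_scaledKernel (hη : IsMollifier d η) (hε : 0 < ε) :
    ∫⁻ z, ENNReal.ofReal (scaledKernel d η ε z) = 1 := by
  rw [← ofReal_integral_eq_lintegral_ofReal
    ((hη.contDiff_scaledKernel ε).continuous.integrable_of_hasCompactSupport
      (hη.hasCompactSupport_scaledKernel hε)) (.of_forall (hη.scaledKernel_nonneg hε)),
    hη.integral_scaledKernel hε, ENNReal.ofReal_one]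

lemma exists_ofReal_scaledKernel_le_indicator (hη : IsMollifier d η) :
    ∃ M : ℝ≥0∞, M ≠ ⊤ ∧ ∀ ε > 0, ∀ z, ENNReal.ofReal (scaledKernel d η ε z) ≤
      (closedBall 0 ε).indicator (fun _ => M * ENNReal.ofReal (ε ^ (-(d : ℝ)))) z := by
  obtain ⟨M, hM⟩ := hη.hasCompactSupport.exists_bound_of_continuous hη.1.continuous
  refine ⟨ENNReal.ofReal M, ENNReal.ofReal_ne_top, fun ε hε z => ?_⟩
  rcases le_or_gt ‖z‖ ε with hz | hz
  · rw [indicator_of_mem (mem_closedBall_zero_iff.2 hz), mul_comm,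
      ← ENNReal.ofReal_mul (by positivity)]
    unfold scaledKernel
    gcongr
    exact (le_abs_self _).trans (hM _)
  · rw [hη.scaledKernel_eq_zero hε hz, ENNReal.ofReal_zero]
    exact zero_le

end IsMollifier

lemma IsLocalA1.exists_lintegral_scaledKernel_le {w : Ed d → ℝ≥0∞} (hw : IsLocalA1 volume w)
    (hη : IsMollifier d η) {ε₀ : ℝ} (hε₀ : 0 < ε₀) :
    ∃ K : ℝ≥0∞, K ≠ ⊤ ∧ ∀ ε ∈ Ioc 0 ε₀, ∀ᵐ x,
      ∫⁻ y, ENNReal.ofReal (scaledKernel d η ε (x - y)) * w y ≤ K * w x ∧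
      ∫⁻ y, ENNReal.ofReal (scaledKernel d η ε (y - x)) * w y ≤ K * w x := by
  obtain ⟨M, hM, hκ⟩ := hη.exists_ofReal_scaledKernel_le_indicator
  obtain ⟨K, hK, hball⟩ := hw ε₀ hε₀
  refine ⟨M * volume (ball (0 : Ed d) 1) * K, by finiteness, fun ε hε => ?_⟩
  set c := M * ENNReal.ofReal (ε ^ (-(d : ℝ))) with hc
  filter_upwards [hball ε hε] with x hx
  have hmean : ∀ κ : Ed d → ℝ≥0∞, (∀ y, κ y ≤ (closedBall x ε).indicator (fun _ => c) y) →
      ∫⁻ y, κ y * w y ≤ M * volume (ball (0 : Ed d) 1) * K * w x := fun κ hκx =>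
    calc ∫⁻ y, κ y * w y ≤ ∫⁻ y, (closedBall x ε).indicator (fun y => c * w y) y :=
          lintegral_mono fun y => (mul_le_mul_left (hκx y) _).trans_eq
            (indicator_mul_left _ _ _).symm
      _ = c * ∫⁻ y in closedBall x ε, w y := by
          rw [lintegral_indicator measurableSet_closedBall,
            lintegral_const_mul' _ _ (by finiteness)]
      _ ≤ c * (K * volume (closedBall x ε) * w x) := by gcongr
      _ = _ := by
          have hscale : ENNReal.ofReal (ε ^ (-(d : ℝ))) * ENNReal.ofReal (ε ^ d) = 1 := by
            rw [← ENNReal.ofReal_mul (Real.rpow_nonneg hε.1.le _), Real.rpow_neg hε.1.le,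
              Real.rpow_natCast, inv_mul_cancel₀ (pow_pos hε.1 d).ne', ENNReal.ofReal_one]
          rw [Measure.addHaar_closedBall _ _ hε.1.le, finrank_euclideanSpace_fin, hc]
          calc _ = M * volume (ball (0 : Ed d) 1) * K * w x *
                (ENNReal.ofReal (ε ^ (-(d : ℝ))) * ENNReal.ofReal (ε ^ d)) := by ring
            _ = _ := by rw [hscale, mul_one]
  refine ⟨hmean _ fun y => (hκ ε hε.1 _).trans_eq ?_, hmean _ fun y => (hκ ε hε.1 _).trans_eq ?_⟩
  · simp only [indicator, mem_closedBall', dist_eq_norm, zero_sub, norm_neg, hc]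
  · simp only [indicator, mem_closedBall, dist_eq_norm, sub_zero, hc]

/-- Mollification by `η` is bounded on `L^r(ν)`, uniformly in the mollification parameter as long as
it stays bounded. -/
def MollifyBounded (d : ℕ) (η : Ed d → ℝ) (r : ℝ≥0∞) (ν : Measure (Ed d)) : Prop :=
  ∀ ε₀ > (0 : ℝ), ∃ K : ℝ≥0∞, K ≠ ⊤ ∧ ∀ ε ∈ Ioc 0 ε₀, ∀ f : Ed d → ℝ,
    AEStronglyMeasurable f volume → eLpNorm (mollify d η ε f) r ν ≤ K * eLpNorm f r ν

lemma enorm_mollify_le (hη : IsMollifier d η) (hε : 0 < ε) (f : Ed d → ℝ) (x : Ed d) :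
    ‖mollify d η ε f x‖ₑ ≤ ∫⁻ y, ENNReal.ofReal (scaledKernel d η ε (x - y)) * ‖f y‖ₑ := by
  refine (enorm_integral_le_lintegral_enorm _).trans_eq (lintegral_congr fun y => ?_)
  rw [enorm_mul]
  congr 1
  exact Real.enorm_of_nonneg (hη.scaledKernel_nonneg hε _)

lemma eLpNorm_ofReal_eq {α : Type*} [MeasurableSpace α] {μ : Measure α} {q : ℝ} (hq : 0 < q)
    (f : α → ℝ) : eLpNorm f (ENNReal.ofReal q) μ = (∫⁻ x, ‖f x‖ₑ ^ q ∂μ) ^ (1 / q) := by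
  rw [eLpNorm_eq_lintegral_rpow_enorm_toReal (ENNReal.ofReal_pos.2 hq).ne' ENNReal.ofReal_ne_top,
    ENNReal.toReal_ofReal hq.le]

lemma mollifyBounded_withDensity_of_schur (hη : IsMollifier d η) {q : ℝ} (hq : 1 ≤ q)
    {g u : Ed d → ℝ≥0∞} (hg : Measurable g) (hg₀ : ∀ x, g x ≠ 0) (hg_top : ∀ x, g x ≠ ⊤)
    (hu : Measurable u)
    (hschur : ∀ ε₀ > (0 : ℝ), ∃ K : ℝ≥0∞, K ≠ ⊤ ∧ ∀ ε ∈ Ioc 0 ε₀,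
      (∀ᵐ x, ∫⁻ y, ENNReal.ofReal (scaledKernel d η ε (x - y)) * g y ≤ K * g x) ∧
      ∀ᵐ y, ∫⁻ x, ENNReal.ofReal (scaledKernel d η ε (x - y)) * (g x ^ (q - 1) * u x) ≤
        K * (g y ^ (q - 1) * u y)) :
    MollifyBounded d η (ENNReal.ofReal q) (volume.withDensity u) := by
  intro ε₀ hε₀
  have hq₀ : 0 < q := by linarith
  obtain ⟨K, hK, hKε⟩ := hschur ε₀ hε₀
  refine ⟨(K ^ (q - 1) * K) ^ (1 / q), ?_, fun ε hε f hf => ?_⟩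
  · have : 0 ≤ q - 1 := by linarith
    finiteness
  have hκ := (hη.contDiff_scaledKernel ε).continuous.measurable
  rw [eLpNorm_ofReal_eq hq₀, eLpNorm_ofReal_eq hq₀,
    ← ENNReal.mul_rpow_of_nonneg _ _ (by positivity)]
  gcongr
  calc ∫⁻ x, ‖mollify d η ε f x‖ₑ ^ q ∂volume.withDensity u
      ≤ ∫⁻ x, u x * ‖mollify d η ε f x‖ₑ ^ q := lintegral_withDensity_le_lintegral_mul _ hu _
    _ ≤ ∫⁻ x, (∫⁻ y, ENNReal.ofReal (scaledKernel d η ε (x - y)) * ‖f y‖ₑ) ^ q * u x := by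
        simp only [mul_comm (u _)]
        gcongr with x
        exact enorm_mollify_le hη hε.1 f x
    _ ≤ K ^ (q - 1) * K * ∫⁻ y, ‖f y‖ₑ ^ q * u y :=
        lintegral_rpow_lintegral_mul_le hq hK hK (by fun_prop) hf.enorm hg.aemeasurable hg₀ hg_top
          hg.aemeasurable hu.aemeasurable (hKε ε hε).1 (hKε ε hε).2
    _ = _ := by
        rw [lintegral_withDensity_eq_lintegral_mul₀ hu.aemeasurable (hf.enorm.pow_const q)]
        simp only [Pi.mul_apply, mul_comm]

theorem IsLocalA1.mollifyBounded {w : Ed d → ℝ≥0∞} (hw : IsLocalA1 volume w) (hwm : Measurable w)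
    (hη : IsMollifier d η) {q : ℝ} (hq : 1 ≤ q) :
    MollifyBounded d η (ENNReal.ofReal q) (volume.withDensity w) := by
  refine mollifyBounded_withDensity_of_schur hη hq (g := 1) measurable_one (by simp) (by simp) hwm
    fun ε₀ hε₀ => ?_
  obtain ⟨K, hK, hKε⟩ := hw.exists_lintegral_scaledKernel_le hη hε₀
  refine ⟨max 1 K, by finiteness, fun ε hε => ⟨.of_forall fun x => ?_, ?_⟩⟩
  · simp only [Pi.one_apply, mul_one]
    rw [lintegral_sub_left_eq_self (μ := volume)
      (fun z => ENNReal.ofReal (scaledKernel d η ε z)) x, hη.lintegral_scaledKernel hε.1]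
    exact le_max_left _ _
  · filter_upwards [hKε ε hε] with y hy
    simp only [Pi.one_apply, ENNReal.one_rpow, one_mul]
    exact hy.2.trans (by gcongr; exact le_max_right _ _)

theorem IsLocalA1.mollifyBounded_rpow_one_sub {w : Ed d → ℝ≥0∞} (hw : IsLocalA1 volume w)
    (hwm : Measurable w) (hw₀ : ∀ x, w x ≠ 0) (hw_top : ∀ x, w x ≠ ⊤) (hη : IsMollifier d η)
    {q : ℝ} (hq : 1 ≤ q) :
    MollifyBounded d η (ENNReal.ofReal q) (volume.withDensity fun x => w x ^ (1 - q)) := by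
  refine mollifyBounded_withDensity_of_schur hη hq hwm hw₀ hw_top (by fun_prop) fun ε₀ hε₀ => ?_
  have hpow : ∀ x, w x ^ (q - 1) * w x ^ (1 - q) = 1 := fun x => by
    rw [← ENNReal.rpow_add _ _ (hw₀ x) (hw_top x), sub_add_sub_cancel, sub_self,
      ENNReal.rpow_zero]
  obtain ⟨K, hK, hKε⟩ := hw.exists_lintegral_scaledKernel_le hη hε₀
  refine ⟨max 1 K, by finiteness, fun ε hε => ⟨?_, .of_forall fun y => ?_⟩⟩
  · filter_upwards [hKε ε hε] with x hx
    exact hx.1.trans (by gcongr; exact le_max_right _ _)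
  · simp only [hpow, mul_one]
    rw [lintegral_sub_right_eq_self (μ := volume)
      (fun z => ENNReal.ofReal (scaledKernel d η ε z)) y, hη.lintegral_scaledKernel hε.1]
    exact le_max_left _ _

end Mollifier

section MollifyTendsto

variable {d : ℕ} {η f g : Ed d → ℝ} {ε : ℝ} {r : ℝ≥0∞} {ν : Measure (Ed d)}

lemma IsMollifier.dist_mollify_le (hη : IsMollifier d η) (hε : 0 < ε) (hg : Continuous g)
    {x : Ed d} {z δ : ℝ} (hδ : 0 ≤ δ) (hx : ∀ y ∈ ball x (2 * ε), dist (g y) z ≤ δ) :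
    dist (mollify d η ε g x) z ≤ δ := by
  rw [mollify_eq_convolution]
  refine dist_convolution_le hδ (fun y hy => ?_) (hη.scaledKernel_nonneg hε)
    (hη.integral_scaledKernel hε) hg.aestronglyMeasurable hx
  rw [mem_ball_zero_iff]
  by_contra! hyε
  exact hy (hη.scaledKernel_eq_zero hε (by linarith))

lemma IsMollifier.continuous_mollify (hη : IsMollifier d η) (hε : 0 < ε)
    (hf : LocallyIntegrable f) : Continuous (mollify d η ε f) := by
  rw [mollify_eq_convolution]
  exact (hη.hasCompactSupport_scaledKernel hε).continuous_convolution_left _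
    (hη.contDiff_scaledKernel ε).continuous hf

lemma IsMollifier.mollify_sub (hη : IsMollifier d η) (hε : 0 < ε) (hf : LocallyIntegrable f)
    (hg : LocallyIntegrable g) :
    mollify d η ε (f - g) = mollify d η ε f - mollify d η ε g := by
  have hexists : ∀ h : Ed d → ℝ, LocallyIntegrable h → ∀ x,
      Integrable fun y => scaledKernel d η ε (x - y) * h y := fun h hh x => by
    simpa using ((hη.hasCompactSupport_scaledKernel hε).convolutionExists_left
      (ContinuousLinearMap.lsmul ℝ ℝ) (hη.contDiff_scaledKernel ε).continuous hh x).integrable_swap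
  ext x
  simp only [mollify, Pi.sub_apply, mul_sub]
  exact integral_sub (hexists f hf x) (hexists g hg x)

lemma IsMollifier.exists_eventually_abs_mollify_sub_le (hη : IsMollifier d η) (hg : Continuous g)
    (hgs : HasCompactSupport g) : ∃ R : ℝ, ∀ δ > 0, ∀ᶠ ε in 𝓝[>] (0 : ℝ), ∀ x,
      |mollify d η ε g x - g x| ≤ (closedBall (0 : Ed d) R).indicator (fun _ => δ) x := by
  obtain ⟨R, hR⟩ := hgs.isCompact.isBounded.subset_closedBall (0 : Ed d)
  have hg₀ : ∀ y, R < ‖y‖ → g y = 0 := fun y hy => image_eq_zero_of_notMem_tsupport fun hy' =>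
    hy.not_ge (mem_closedBall_zero_iff.1 (hR hy'))
  refine ⟨R + 2, fun δ hδ => ?_⟩
  obtain ⟨t, ht, hgt⟩ := Metric.uniformContinuous_iff.1
    (hgs.uniformContinuous_of_continuous hg) δ hδ
  filter_upwards [Ioo_mem_nhdsGT (show (0 : ℝ) < min (t / 2) 1 by positivity)] with ε hε x
  obtain ⟨hεt, hε₁⟩ := lt_min_iff.1 hε.2
  rw [← Real.dist_eq]
  by_cases hx : ‖x‖ ≤ R + 2
  · rw [indicator_of_mem (mem_closedBall_zero_iff.2 hx)]
    refine hη.dist_mollify_le hε.1 hg hδ.le fun y hy => (hgt ?_).le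
    rw [mem_ball] at hy
    linarith
  · rw [indicator_of_notMem (by simpa using hx), hg₀ x (by linarith)]
    refine hη.dist_mollify_le hε.1 hg le_rfl fun y hy => ?_
    rw [mem_ball', dist_eq_norm] at hy
    have := norm_sub_norm_le x y
    rw [hg₀ y (by linarith), dist_self]

lemma IsMollifier.tendsto_eLpNorm_mollify_sub_of_hasCompactSupport [IsLocallyFiniteMeasure ν]
    (hη : IsMollifier d η) (hr₀ : r ≠ 0) (hr : r ≠ ⊤) (hg : Continuous g)
    (hgs : HasCompactSupport g) :
    Tendsto (fun ε => eLpNorm (mollify d η ε g - g) r ν) (𝓝[>] 0) (𝓝 0) := by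
  obtain ⟨R, hR⟩ := hη.exists_eventually_abs_mollify_sub_le hg hgs
  rw [ENNReal.tendsto_nhds_zero]
  intro τ hτ
  have hball : ν (closedBall (0 : Ed d) R) ^ (1 / r.toReal) ≠ ⊤ :=
    ENNReal.rpow_ne_top_of_nonneg (by positivity) (isCompact_closedBall _ _).measure_lt_top.ne
  obtain ⟨δ, hδ, hδτ⟩ := ENNReal.exists_nnreal_pos_mul_lt hball hτ.ne'
  filter_upwards [hR δ hδ] with ε hε
  calc eLpNorm (mollify d η ε g - g) r ν
      ≤ eLpNorm ((closedBall (0 : Ed d) R).indicator fun _ => (δ : ℝ)) r ν := eLpNorm_mono_real hε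
    _ = δ * ν (closedBall (0 : Ed d) R) ^ (1 / r.toReal) := by
        rw [eLpNorm_indicator_const measurableSet_closedBall hr₀ hr,
          Real.enorm_of_nonneg δ.coe_nonneg, ENNReal.ofReal_coe_nnreal]
    _ ≤ τ := hδτ.le

theorem MollifyBounded.tendsto_eLpNorm_mollify_sub [IsLocallyFiniteMeasure ν]
    (hb : MollifyBounded d η r ν) (hη : IsMollifier d η) (hr₁ : 1 ≤ r) (hr : r ≠ ⊤)
    (hf : LocallyIntegrable f) (hfr : MemLp f r ν) :
    Tendsto (fun ε => eLpNorm (mollify d η ε f - f) r ν) (𝓝[>] 0) (𝓝 0) := by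
  obtain ⟨K, hK, hKε⟩ := hb 1 one_pos
  rw [ENNReal.tendsto_nhds_zero]
  intro δ hδ
  have hK₂ : K + 2 ≠ ⊤ := by finiteness
  set τ := δ / (K + 2) with hτ
  have hτ₀ : τ ≠ 0 := ENNReal.div_ne_zero.2 ⟨hδ.ne', hK₂⟩
  obtain ⟨g, hgs, hgf, hg, hgr⟩ := hfr.exists_hasCompactSupport_eLpNorm_sub_le hr hτ₀
  have hgl : LocallyIntegrable g := hg.locallyIntegrable
  filter_upwards [Ioc_mem_nhdsGT one_pos, ENNReal.tendsto_nhds_zero.1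
    (hη.tendsto_eLpNorm_mollify_sub_of_hasCompactSupport (ν := ν) (one_pos.trans_le hr₁).ne' hr hg
      hgs) τ (pos_iff_ne_zero.2 hτ₀)] with ε hε hgε
  have hMfg := (hη.continuous_mollify hε.1 (hf.sub hgl)).aestronglyMeasurable (μ := ν)
  have hMg := (hη.continuous_mollify hε.1 hgl).aestronglyMeasurable (μ := ν)
  have hfg := (hfr.sub hgr).1
  have hsplit : mollify d η ε f - f =
      mollify d η ε (f - g) - (f - g) + (mollify d η ε g - g) := by
    rw [hη.mollify_sub hε.1 hf hgl]
    abel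
  calc eLpNorm (mollify d η ε f - f) r ν
      ≤ eLpNorm (mollify d η ε (f - g)) r ν + eLpNorm (f - g) r ν
        + eLpNorm (mollify d η ε g - g) r ν := by
        rw [hsplit]
        exact (eLpNorm_add_le (hMfg.sub hfg) (hMg.sub hgr.1) hr₁).trans
          (add_le_add_left (eLpNorm_sub_le hMfg hfg hr₁) _)
    _ ≤ K * τ + τ + τ := by
        gcongr
        exact (hKε ε hε _ (hf.sub hgl).aestronglyMeasurable).trans (by gcongr)
    _ = (K + 2) * τ := by ring
    _ ≤ δ := by rw [hτ]; exact ENNReal.mul_div_le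

end MollifyTendsto

section WeightedLp

variable {d : ℕ} {q : ℝ} {σ f g : Ed d → ℝ}

/-- The measure `σ dx`. On it, `MemWLp` and `wNorm` become Mathlib's `MemLp` and `eLpNorm`. -/
noncomputable def weightedMeasure (σ : Ed d → ℝ) : Measure (Ed d) :=
  volume.withDensity fun x => ENNReal.ofReal (σ x)

lemma isLocallyFiniteMeasure_weightedMeasure (hσ : LocallyIntegrable σ) :
    IsLocallyFiniteMeasure (weightedMeasure σ) := by
  refine ⟨fun x => ?_⟩
  obtain ⟨t, ht, hσt⟩ := hσ x
  refine ⟨t, ht, ?_⟩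
  rw [weightedMeasure, withDensity_apply' _ t]
  exact hσt.lintegral_lt_top

lemma integral_weightedMeasure (hσ : Measurable σ) (hσ₀ : ∀ x, 0 ≤ σ x) (f : Ed d → ℝ) :
    ∫ x, f x ∂weightedMeasure σ = ∫ x, f x * σ x := by
  rw [weightedMeasure, integral_withDensity_eq_integral_toReal_smul (by fun_prop) (by simp)]
  simp only [ENNReal.toReal_ofReal (hσ₀ _), smul_eq_mul, mul_comm]

lemma integrable_weightedMeasure_iff (hσ : Measurable σ) (hσ₀ : ∀ x, 0 ≤ σ x) :
    Integrable f (weightedMeasure σ) ↔ Integrable fun x => f x * σ x := by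
  rw [weightedMeasure, integrable_withDensity_iff_integrable_smul' (by fun_prop) (by simp)]
  simp only [ENNReal.toReal_ofReal (hσ₀ _), smul_eq_mul, mul_comm]

lemma memWLp_iff (hσ : Measurable σ) (hσ₀ : ∀ x, 0 ≤ σ x) (hq : 0 < q) :
    MemWLp d q σ f ↔
      AEStronglyMeasurable f volume ∧ MemLp f (ENNReal.ofReal q) (weightedMeasure σ) := by
  refine and_congr_right fun hf => ?_
  have hac : weightedMeasure σ ≪ volume := withDensity_absolutelyContinuous _ _
  rw [← integrable_norm_rpow_iff (hf.mono_ac hac) (ENNReal.ofReal_pos.2 hq).ne'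
    ENNReal.ofReal_ne_top, ENNReal.toReal_ofReal hq.le, integrable_weightedMeasure_iff hσ hσ₀]
  rfl

lemma wNorm_eq_toReal_eLpNorm (hσ : Measurable σ) (hσ₀ : ∀ x, 0 ≤ σ x) (hq : 0 < q)
    (hf : MemWLp d q σ f) :
    wNorm d q σ f = (eLpNorm f (ENNReal.ofReal q) (weightedMeasure σ)).toReal := by
  rw [((memWLp_iff hσ hσ₀ hq).1 hf).2.eLpNorm_eq_integral_rpow_norm (ENNReal.ofReal_pos.2 hq).ne'
    ENNReal.ofReal_ne_top, ENNReal.toReal_ofReal hq.le, integral_weightedMeasure hσ hσ₀,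
    ENNReal.toReal_ofReal, wNorm, one_div]
  · rfl
  · exact Real.rpow_nonneg (integral_nonneg fun x => mul_nonneg (by positivity) (hσ₀ x)) _

lemma locallyIntegrable_of_memWLp_polyDecay {a : ℝ} (h : MemWLp d q σ (polyDecay a)) :
    LocallyIntegrable σ :=
  locallyIntegrable_of_mul_polyDecay (a := a * q) <| h.2.congr <| .of_forall fun x => by
    simp only [abs_of_pos (polyDecay_pos a x), polyDecay_rpow, mul_comm]

lemma mul_le_rpow_mul_add_rpow_mul {p q : ℝ} (h : p.HolderConjugate q) {a b w : ℝ} (ha : 0 ≤ a)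
    (hb : 0 ≤ b) (hw : 0 < w) : a * b ≤ a ^ p * w + b ^ q * w ^ (-(q - 1)) := by
  have hexp : -p⁻¹ * q = -(q - 1) := by
    have := h.inv_add_inv_eq_one
    have := h.symm.ne_zero
    field_simp at *
    linarith
  calc a * b = a * w ^ p⁻¹ * (b * w ^ (-p⁻¹)) := by
        rw [mul_mul_mul_comm, ← Real.rpow_add hw, add_neg_cancel, Real.rpow_zero, mul_one]
    _ ≤ (a * w ^ p⁻¹) ^ p / p + (b * w ^ (-p⁻¹)) ^ q / q :=
        Real.young_inequality_of_nonneg (by positivity) (by positivity) h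
    _ ≤ (a * w ^ p⁻¹) ^ p + (b * w ^ (-p⁻¹)) ^ q :=
        add_le_add (div_le_self (by positivity) h.lt.le) (div_le_self (by positivity) h.symm.lt.le)
    _ = _ := by
        rw [Real.mul_rpow ha (by positivity), Real.mul_rpow hb (by positivity),
          ← Real.rpow_mul hw.le, ← Real.rpow_mul hw.le, inv_mul_cancel₀ h.ne_zero, Real.rpow_one,
          hexp]

lemma MemWLp.integrable_mul {p : ℝ} (hp : 1 < p) (hσ : ∀ x, 0 < σ x) (hf : MemWLp d p σ f)
    (hg : MemWLp d (p / (p - 1)) (fun x => σ x ^ (-(p / (p - 1) - 1))) g) :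
    Integrable fun x => f x * g x := by
  refine (hf.2.add hg.2).mono' (hf.1.mul hg.1) (.of_forall fun x => ?_)
  rw [Real.norm_eq_abs, abs_mul]
  exact mul_le_rpow_mul_add_rpow_mul (.conjExponent hp) (abs_nonneg _) (abs_nonneg _) (hσ x)

section Mollify

variable {η : Ed d → ℝ}

protected lemma MemWLp.mollify (hη : IsMollifier d η) (hσ : Measurable σ)
    (hσ₀ : ∀ x, 0 ≤ σ x) (hq : 0 < q)
    (hb : MollifyBounded d η (ENNReal.ofReal q) (weightedMeasure σ)) (hf : MemWLp d q σ f)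
    (hfl : LocallyIntegrable f) {ε : ℝ} (hε : 0 < ε) : MemWLp d q σ (mollify d η ε f) := by
  have hcont := hη.continuous_mollify hε hfl
  obtain ⟨K, hK, hKε⟩ := hb ε hε
  refine (memWLp_iff hσ hσ₀ hq).2 ⟨hcont.aestronglyMeasurable, hcont.aestronglyMeasurable, ?_⟩
  exact (hKε ε ⟨hε, le_rfl⟩ f hf.1).trans_lt
    (ENNReal.mul_lt_top hK.lt_top ((memWLp_iff hσ hσ₀ hq).1 hf).2.2)

lemma MemWLp.tendsto_wNorm_mollify_sub (hη : IsMollifier d η) (hσ : Measurable σ)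
    (hσ₀ : ∀ x, 0 ≤ σ x) (hσl : LocallyIntegrable σ) (hq : 1 ≤ q)
    (hb : MollifyBounded d η (ENNReal.ofReal q) (weightedMeasure σ)) (hf : MemWLp d q σ f)
    (hfl : LocallyIntegrable f) :
    Tendsto (fun ε => wNorm d q σ (fun x => mollify d η ε f x - f x)) (𝓝[>] 0) (𝓝 0) := by
  have hq₀ : 0 < q := by linarith
  have := isLocallyFiniteMeasure_weightedMeasure hσl
  have hlim := hb.tendsto_eLpNorm_mollify_sub hη (ENNReal.one_le_ofReal.2 hq)
    ENNReal.ofReal_ne_top hfl ((memWLp_iff hσ hσ₀ hq₀).1 hf).2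
  refine ((ENNReal.tendsto_toReal ENNReal.zero_ne_top).comp hlim).congr' ?_
  filter_upwards [self_mem_nhdsWithin] with ε hε
  have hMf := (memWLp_iff hσ hσ₀ hq₀).1 (hf.mollify hη hσ hσ₀ hq₀ hb hfl hε)
  have hf' := (memWLp_iff hσ hσ₀ hq₀).1 hf
  exact (wNorm_eq_toReal_eLpNorm hσ hσ₀ hq₀
    ((memWLp_iff hσ hσ₀ hq₀).2 ⟨hMf.1.sub hf'.1, hMf.2.sub hf'.2⟩)).symm

end Mollify

end WeightedLp

section PowerWeight

variable {E : Type*} [NormedAddCommGroup E] {γ₀ γ : ℝ} {x : E}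

/-- The model two-power weight `‖x‖ ^ (-γ₀) * (1 + ‖x‖) ^ (γ₀ - γ)`, which behaves like
`‖x‖ ^ (-γ₀)` at `0` and like `‖x‖ ^ (-γ)` at infinity. The family is closed under powers and under
multiplication by `polyDecay`. -/
noncomputable def powerWeight (γ₀ γ : ℝ) (x : E) : ℝ := ‖x‖ ^ (-γ₀) * polyDecay (γ - γ₀) x

lemma powerWeight_nonneg (γ₀ γ : ℝ) (x : E) : 0 ≤ powerWeight γ₀ γ x :=
  mul_nonneg (by positivity) (polyDecay_pos _ x).le

lemma powerWeight_pos (hx : x ≠ 0) : 0 < powerWeight γ₀ γ x :=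
  mul_pos (Real.rpow_pos_of_pos (norm_pos_iff.2 hx) _) (polyDecay_pos _ x)

lemma powerWeight_mul_polyDecay (γ₀ γ a : ℝ) (x : E) :
    powerWeight γ₀ γ x * polyDecay a x = powerWeight γ₀ (γ + a) x := by
  rw [powerWeight, powerWeight, mul_assoc, polyDecay, polyDecay, ← Real.rpow_add (by positivity),
    polyDecay]
  ring_nf

lemma powerWeight_rpow (γ₀ γ r : ℝ) (x : E) :
    powerWeight γ₀ γ x ^ r = powerWeight (γ₀ * r) (γ * r) x := by
  rw [powerWeight, powerWeight, Real.mul_rpow (by positivity) (polyDecay_pos _ x).le,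
    polyDecay_rpow, ← Real.rpow_mul (norm_nonneg x), neg_mul, sub_mul]

lemma powerWeight_le_of_norm_le_one (hx : ‖x‖ ≤ 1) :
    powerWeight γ₀ γ x ≤ 2 ^ |γ - γ₀| * ‖x‖ ^ (-γ₀) := by
  have h := polyDecay_le_of_norm_sub_le (γ - γ₀) (x := x) (y := 0) (R := 1) (by rwa [sub_zero])
  rw [polyDecay_zero_right, mul_one, one_add_one_eq_two] at h
  rw [powerWeight, mul_comm]
  exact mul_le_mul_of_nonneg_right h (by positivity)

lemma norm_rpow_neg_le_powerWeight_of_norm_le_one (hx : ‖x‖ ≤ 1) :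
    ‖x‖ ^ (-γ₀) ≤ 2 ^ |γ - γ₀| * powerWeight γ₀ γ x := by
  have h := polyDecay_le_of_norm_sub_le (γ - γ₀) (x := 0) (y := x) (R := 1)
    (by rwa [zero_sub, norm_neg])
  rw [polyDecay_zero_right, one_add_one_eq_two] at h
  rw [powerWeight, mul_left_comm]
  exact le_mul_of_one_le_right (by positivity) h

lemma powerWeight_eq_norm_rpow_neg_mul (hx : x ≠ 0) :
    powerWeight γ₀ γ x = ‖x‖ ^ (-γ) * ((1 + ‖x‖) / ‖x‖) ^ (γ₀ - γ) := by
  have hpos : 0 < ‖x‖ := norm_pos_iff.2 hx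
  have hsplit : ‖x‖ ^ (-γ₀) = ‖x‖ ^ (-γ) * ‖x‖ ^ (γ - γ₀) := by
    rw [← Real.rpow_add hpos]
    ring_nf
  rw [powerWeight, polyDecay, neg_sub, Real.div_rpow (by positivity) hpos.le, hsplit,
    ← neg_sub γ γ₀, Real.rpow_neg hpos.le (γ - γ₀), div_inv_eq_mul]
  ring

lemma powerWeight_le_of_one_le_norm (hx : 1 ≤ ‖x‖) :
    powerWeight γ₀ γ x ≤ 2 ^ |γ - γ₀| * ‖x‖ ^ (-γ) := by
  have hpos : 0 < ‖x‖ := by linarith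
  rw [powerWeight_eq_norm_rpow_neg_mul (norm_pos_iff.1 hpos), mul_comm, abs_sub_comm]
  gcongr
  refine rpow_le_rpow_abs one_le_two ?_ ?_ _
  · rw [le_div_iff₀ hpos]; linarith
  · rw [div_le_iff₀ hpos]; linarith

lemma norm_rpow_neg_le_powerWeight_of_one_le_norm (hx : 1 ≤ ‖x‖) :
    ‖x‖ ^ (-γ) ≤ 2 ^ |γ - γ₀| * powerWeight γ₀ γ x := by
  have hpos : 0 < ‖x‖ := by linarith
  have hle : ((1 + ‖x‖) / ‖x‖) ^ (γ - γ₀) ≤ 2 ^ |γ - γ₀| := by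
    refine rpow_le_rpow_abs one_le_two ?_ ?_ _
    · rw [le_div_iff₀ hpos]; linarith
    · rw [div_le_iff₀ hpos]; linarith
  rw [powerWeight_eq_norm_rpow_neg_mul (norm_pos_iff.1 hpos), ← neg_sub γ γ₀,
    Real.rpow_neg (by positivity) (γ - γ₀), mul_left_comm]
  exact le_mul_of_one_le_right (by positivity)
    (by rwa [← div_eq_mul_inv, one_le_div₀ (by positivity)])

variable [MeasurableSpace E] [BorelSpace E]

lemma measurable_powerWeight (γ₀ γ : ℝ) : Measurable (powerWeight γ₀ γ : E → ℝ) :=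
  Measurable.mul (by fun_prop) (continuous_polyDecay _).measurable

variable [NormedSpace ℝ E] [FiniteDimensional ℝ E] [Nontrivial E] {μ : Measure E}
  [μ.IsAddHaarMeasure]

lemma integrable_powerWeight (hγ₀ : γ₀ < Module.finrank ℝ E) (hγ : Module.finrank ℝ E < γ) :
    Integrable (powerWeight γ₀ γ : E → ℝ) μ := by
  have hball : Integrable ((closedBall (0 : E) 1).indicator fun x => ‖x‖ ^ (-γ₀)) μ :=
    ((locallyIntegrable_norm_rpow_neg hγ₀).integrableOn_isCompact
      (isCompact_closedBall 0 1)).integrable_indicator measurableSet_closedBall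
  refine ((hball.add (integrable_truncKernel hγ one_pos)).const_mul (2 ^ |γ - γ₀|)).mono'
    (measurable_powerWeight γ₀ γ).aestronglyMeasurable (.of_forall fun x => ?_)
  rw [Real.norm_of_nonneg (powerWeight_nonneg γ₀ γ x), Pi.add_apply]
  rcases le_or_gt ‖x‖ 1 with hx | hx
  · rw [indicator_of_mem (mem_closedBall_zero_iff.2 hx)]
    refine (powerWeight_le_of_norm_le_one hx).trans ?_
    gcongr
    exact le_add_of_nonneg_right (truncKernel_nonneg x)
  · rw [indicator_of_notMem (by simpa using hx), zero_add, truncKernel,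
      indicator_of_mem (s := {h : E | 1 ≤ ‖h‖}) hx.le, ← Real.rpow_neg (norm_nonneg x)]
    exact powerWeight_le_of_one_le_norm hx.le

lemma isLocalA1_powerWeight (hγ₀_nonneg : 0 ≤ γ₀) (hγ₀ : γ₀ < Module.finrank ℝ E) (γ : ℝ) :
    IsLocalA1 μ fun x : E => ENNReal.ofReal (powerWeight γ₀ γ x) := by
  simp only [powerWeight, ENNReal.ofReal_mul (Real.rpow_nonneg (norm_nonneg _) _)]
  refine (isLocalA1_norm_rpow_neg hγ₀_nonneg hγ₀).mul_of_slowlyVarying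
    (fun r₀ hr₀ => ⟨ENNReal.ofReal ((1 + r₀) ^ |γ - γ₀|), ENNReal.ofReal_ne_top, fun x y hxy => ?_⟩)
    fun _ => ENNReal.ofReal_ne_top
  rw [← ENNReal.ofReal_mul (by positivity)]
  exact ENNReal.ofReal_le_ofReal (polyDecay_le_of_norm_sub_le _ (by rwa [← dist_eq_norm]))

end PowerWeight

section AdmissibleWeight

variable {d : ℕ} {s p : ℝ} {ρ : Ed d → ℝ} {c C γ₀ γ : ℝ}

lemma TwoPowerWeight.ae_comparable_powerWeight (hw : TwoPowerWeight d ρ c C γ₀ γ) :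
    ∃ A > 0, ∃ B > 0, ∀ᵐ x, ρ x ≤ A * powerWeight γ₀ γ x ∧ powerWeight γ₀ γ x ≤ B * ρ x := by
  obtain ⟨hc, hcC, hnear, hfar⟩ := hw
  have hC : 0 < C := hc.trans hcC
  have hcompare : ∀ {r t w : ℝ}, c * t ≤ r ∧ r ≤ C * t → t ≤ 2 ^ |γ - γ₀| * w →
      w ≤ 2 ^ |γ - γ₀| * t → r ≤ C * 2 ^ |γ - γ₀| * w ∧ w ≤ 2 ^ |γ - γ₀| / c * r := by
    rintro r t w ⟨hcr, hrC⟩ htw hwt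
    constructor
    · calc r ≤ C * t := hrC
        _ ≤ C * (2 ^ |γ - γ₀| * w) := by gcongr
        _ = _ := (mul_assoc _ _ _).symm
    · calc w ≤ 2 ^ |γ - γ₀| / c * (c * t) := hwt.trans_eq (by field_simp)
        _ ≤ _ := by gcongr
  refine ⟨C * 2 ^ |γ - γ₀|, by positivity, 2 ^ |γ - γ₀| / c, by positivity, ?_⟩
  filter_upwards [hnear, hfar] with x hxnear hxfar
  rcases le_or_gt ‖x‖ 1 with hx | hx
  · exact hcompare (hxnear hx) (norm_rpow_neg_le_powerWeight_of_norm_le_one hx)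
      (powerWeight_le_of_norm_le_one hx)
  · exact hcompare (hxfar hx) (norm_rpow_neg_le_powerWeight_of_one_le_norm hx.le)
      (powerWeight_le_of_one_le_norm hx.le)

lemma TwoPowerWeight.isLocalA1 [NeZero d] (hw : TwoPowerWeight d ρ c C γ₀ γ)
    (hγ₀ : γ₀ ∈ Ico (0 : ℝ) d) : IsLocalA1 volume fun x => ENNReal.ofReal (ρ x) := by
  obtain ⟨A, hA, B, hB, hAB⟩ := hw.ae_comparable_powerWeight
  refine (isLocalA1_powerWeight hγ₀.1 (by simpa using hγ₀.2) γ).of_le_of_le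
    (A := ENNReal.ofReal A) (B := ENNReal.ofReal B) ENNReal.ofReal_ne_top
    ENNReal.ofReal_ne_top ?_ ?_
  all_goals
    filter_upwards [hAB] with x hx
    rw [← ENNReal.ofReal_mul (by positivity)]
  exacts [ENNReal.ofReal_le_ofReal hx.1, ENNReal.ofReal_le_ofReal hx.2]

lemma memWLp_polyDecay_of_le_powerWeight [NeZero d] {q A a α₀ α : ℝ} {σ : Ed d → ℝ}
    (hσ : Measurable σ) (hσ₀ : ∀ x, 0 ≤ σ x) (hle : ∀ᵐ x, σ x ≤ A * powerWeight α₀ α x)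
    (hα₀ : α₀ < d) (hα : d < α + a * q) : MemWLp d q σ (polyDecay a) := by
  have hcont := continuous_polyDecay (E := Ed d)
  refine ⟨(hcont a).aestronglyMeasurable, ?_⟩
  simp only [abs_of_pos (polyDecay_pos a _), polyDecay_rpow]
  refine Integrable.mono'
    ((integrable_powerWeight (by simpa using hα₀) (by simpa using hα)).const_mul A)
    ((hcont _).measurable.mul hσ).aestronglyMeasurable ?_
  filter_upwards [hle] with x hx
  rw [Real.norm_of_nonneg (mul_nonneg (polyDecay_pos _ x).le (hσ₀ x)),
    ← powerWeight_mul_polyDecay, ← mul_assoc, mul_comm]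
  exact mul_le_mul_of_nonneg_right hx (polyDecay_pos _ x).le

/-- The weights for which mollification acts on `X_{p,s,ρ}`: the decay `(1 + ‖x‖) ^ (-(d + 2s))` of
the fractional Laplacian of a test function has finite norm in `L^p(ρ dx)` and in the dual space
`L^{p'}(ρ^{-(p'-1)} dx)`, so that it pairs with the functions of both spaces, and `ρ` satisfies the
local `A₁` condition. -/
structure IsAdmissibleWeight (d : ℕ) (s p : ℝ) (ρ : Ed d → ℝ) : Prop where
  pos : ∀ x, 0 < ρ x
  measurable : Measurable ρ
  memWLp_polyDecay : MemWLp d p ρ (polyDecay ((d : ℝ) + 2 * s))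
  memWLp_dual_polyDecay : MemWLp d (p / (p - 1)) (fun x => ρ x ^ (-(p / (p - 1) - 1)))
    (polyDecay ((d : ℝ) + 2 * s))
  isLocalA1 : IsLocalA1 volume fun x => ENNReal.ofReal (ρ x)

theorem TwoPowerWeight.isAdmissibleWeight [NeZero d] (hw : TwoPowerWeight d ρ c C γ₀ γ)
    (hρ₀ : ∀ x, 0 < ρ x) (hρ : Measurable ρ) (hp : 1 < p) (hγ₀ : γ₀ ∈ Ico (0 : ℝ) d)
    (hγ : γ ∈ Ioo (d - p * (d + 2 * s)) (d + 2 * p * s)) : IsAdmissibleWeight d s p ρ := by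
  obtain ⟨A, _, B, hB, hAB⟩ := hw.ae_comparable_powerWeight
  have hp₀ : 0 < p - 1 := by linarith
  have hq : p / (p - 1) - 1 = (p - 1)⁻¹ := by field_simp; ring
  refine ⟨hρ₀, hρ, ?_, ?_, hw.isLocalA1 hγ₀⟩
  · exact memWLp_polyDecay_of_le_powerWeight hρ (fun x => (hρ₀ x).le) (hAB.mono fun x hx => hx.1)
      hγ₀.2 (by linarith [hγ.1])
  · have hdual : ∀ᵐ x, ρ x ^ (-(p - 1)⁻¹) ≤ B ^ (p - 1)⁻¹ *
        powerWeight (γ₀ * -(p - 1)⁻¹) (γ * -(p - 1)⁻¹) x := by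
      filter_upwards [hAB, Measure.ae_ne volume 0] with x hx hx₀
      calc ρ x ^ (-(p - 1)⁻¹) ≤ (powerWeight γ₀ γ x / B) ^ (-(p - 1)⁻¹) :=
            Real.rpow_le_rpow_of_nonpos (div_pos (powerWeight_pos hx₀) hB)
              ((div_le_iff₀' hB).2 hx.2) (neg_nonpos.2 (by positivity))
        _ = _ := by
          rw [Real.div_rpow (powerWeight_nonneg _ _ x) hB.le, Real.rpow_neg hB.le, div_inv_eq_mul,
            mul_comm, powerWeight_rpow]
    rw [hq]
    refine memWLp_polyDecay_of_le_powerWeight (by fun_prop)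
      (fun x => Real.rpow_nonneg (hρ₀ x).le _) hdual ?_ ?_
    · have := mul_nonneg hγ₀.1 (inv_nonneg.2 hp₀.le)
      have := NeZero.pos d
      have : (0 : ℝ) < d := by positivity
      linarith
    · have : γ * -(p - 1)⁻¹ + (d + 2 * s) * (p / (p - 1)) =
          d + (d + 2 * p * s - γ) * (p - 1)⁻¹ := by field_simp; ring
      have := mul_pos (sub_pos.2 hγ.2) (inv_pos.2 hp₀)
      linarith

end AdmissibleWeight

section Mollification

variable {d : ℕ} {s Cds p : ℝ} {ρ η v V : Ed d → ℝ}

namespace IsAdmissibleWeight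

lemma integrable_mul_polyDecay (hρ : IsAdmissibleWeight d s p ρ) (hp : 1 < p)
    (hv : MemWLp d p ρ v) : Integrable fun x => v x * polyDecay ((d : ℝ) + 2 * s) x :=
  hv.integrable_mul hp hρ.pos hρ.memWLp_dual_polyDecay

lemma integrable_mul_polyDecay_of_dual (hρ : IsAdmissibleWeight d s p ρ) (hp : 1 < p)
    (hV : MemWLp d (p / (p - 1)) (fun x => ρ x ^ (-(p / (p - 1) - 1))) V) :
    Integrable fun x => V x * polyDecay ((d : ℝ) + 2 * s) x := by
  simpa only [mul_comm] using hρ.memWLp_polyDecay.integrable_mul hp hρ.pos hV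

lemma mollifyBounded (hρ : IsAdmissibleWeight d s p ρ) (hp : 1 ≤ p) (hη : IsMollifier d η) :
    MollifyBounded d η (ENNReal.ofReal p) (weightedMeasure ρ) :=
  hρ.isLocalA1.mollifyBounded hρ.measurable.ennreal_ofReal hη hp

lemma mollifyBounded_dual (hρ : IsAdmissibleWeight d s p ρ) {q : ℝ} (hq : 1 ≤ q)
    (hη : IsMollifier d η) :
    MollifyBounded d η (ENNReal.ofReal q) (weightedMeasure fun x => ρ x ^ (-(q - 1))) := by
  simpa only [weightedMeasure, neg_sub, ENNReal.ofReal_rpow_of_pos (hρ.pos _)] using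
    hρ.isLocalA1.mollifyBounded_rpow_one_sub hρ.measurable.ennreal_ofReal
      (fun x => (ENNReal.ofReal_pos.2 (hρ.pos x)).ne') (fun _ => ENNReal.ofReal_ne_top) hη hq

end IsAdmissibleWeight

lemma IsMollifier.contDiff_mollify (hη : IsMollifier d η) {ε : ℝ} (hε : 0 < ε)
    (hv : LocallyIntegrable v) : ContDiff ℝ (⊤ : ℕ∞) (mollify d η ε v) := by
  rw [mollify_eq_convolution]
  exact (hη.hasCompactSupport_scaledKernel hε).contDiff_convolution_left _
    (hη.contDiff_scaledKernel ε) hv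

lemma IsDistFracLap.fracLap_mollify [NeZero d] (hvV : IsDistFracLap d s Cds v V)
    (hs : s ∈ Ioo (0 : ℝ) 1) (hη : IsMollifier d η)
    (hv : Integrable fun x => v x * polyDecay ((d : ℝ) + 2 * s) x) {ε : ℝ} (hε : 0 < ε) :
    fracLap d s Cds (mollify d η ε v) = mollify d η ε V := by
  rw [mollify_eq_convolution, mollify_eq_convolution]
  exact hvV.fracLap_convolution hs (hη.contDiff_scaledKernel ε)
    (hη.hasCompactSupport_scaledKernel hε) hv

protected lemma IsDistFracLap.mollify [NeZero d] (hvV : IsDistFracLap d s Cds v V)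
    (hs : s ∈ Ioo (0 : ℝ) 1) (hη : IsMollifier d η)
    (hv : Integrable fun x => v x * polyDecay ((d : ℝ) + 2 * s) x)
    (hV : Integrable fun x => V x * polyDecay ((d : ℝ) + 2 * s) x) {ε : ℝ} (hε : 0 < ε) :
    IsDistFracLap d s Cds (mollify d η ε v) (mollify d η ε V) := by
  rw [mollify_eq_convolution, mollify_eq_convolution]
  exact hvV.convolution hs (hη.contDiff_scaledKernel ε) (hη.hasCompactSupport_scaledKernel hε)
    hv hV

lemma tendsto_xNorm_zero {ι : Type*} {l : Filter ι} {f g : ι → Ed d → ℝ}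
    (hf : Tendsto (fun i => wNorm d p ρ (f i)) l (𝓝 0))
    (hg : Tendsto (fun i => wNorm d (p / (p - 1)) (fun x => ρ x ^ (-(p / (p - 1) - 1))) (g i)) l
      (𝓝 0)) : Tendsto (fun i => xNorm d p ρ (f i) (g i)) l (𝓝 0) := by
  simpa [xNorm] using ((hf.pow 2).add (hg.pow 2)).sqrt

theorem stmt15_general [NeZero d] (hs : s ∈ Ioo (0 : ℝ) 1) (hp : 1 < p)
    (hρ : IsAdmissibleWeight d s p ρ) (hη : IsMollifier d η) (hvV : MemX d s Cds p ρ v V) :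
    (∀ ε > 0, (∀ x, fracLap d s Cds (mollify d η ε v) x = mollify d η ε V x) ∧
      ContDiff ℝ (⊤ : ℕ∞) (mollify d η ε v) ∧
      MemX d s Cds p ρ (mollify d η ε v) (mollify d η ε V)) ∧
    Tendsto (fun ε => xNorm d p ρ (fun x => mollify d η ε v x - v x)
      (fun x => mollify d η ε V x - V x)) (𝓝[>] 0) (𝓝 0) := by
  obtain ⟨hv, hfrac, hV⟩ := hvV
  set q := p / (p - 1)
  have hq : 1 < q := (Real.HolderConjugate.conjExponent hp).symm.lt
  have hp₀ : 0 < p := by linarith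
  have hq₀ : 0 < q := by linarith
  have hρ₀ : ∀ x, 0 ≤ ρ x := fun x => (hρ.pos x).le
  have hσ₀ : ∀ x, 0 ≤ ρ x ^ (-(q - 1)) := fun x => Real.rpow_nonneg (hρ₀ x) _
  have hσ : Measurable fun x => ρ x ^ (-(q - 1)) := hρ.measurable.pow_const _
  have hvi := hρ.integrable_mul_polyDecay hp hv
  have hVi := hρ.integrable_mul_polyDecay_of_dual hp hV
  have hvl := locallyIntegrable_of_mul_polyDecay hvi
  have hVl := locallyIntegrable_of_mul_polyDecay hVi
  have hρb := hρ.mollifyBounded hp.le hη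
  have hσb := hρ.mollifyBounded_dual hq.le hη
  refine ⟨fun ε hε => ⟨congrFun (hfrac.fracLap_mollify hs hη hvi hε), hη.contDiff_mollify hε hvl,
    hv.mollify hη hρ.measurable hρ₀ hp₀ hρb hvl hε, hfrac.mollify hs hη hvi hVi hε,
    hV.mollify hη hσ hσ₀ hq₀ hσb hVl hε⟩, tendsto_xNorm_zero ?_ ?_⟩
  · exact hv.tendsto_wNorm_mollify_sub hη hρ.measurable hρ₀
      (locallyIntegrable_of_memWLp_polyDecay hρ.memWLp_polyDecay) hp.le hρb hvl
  · exact hV.tendsto_wNorm_mollify_sub hη hσ hσ₀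
      (locallyIntegrable_of_memWLp_polyDecay hρ.memWLp_dual_polyDecay) hq.le hσb hVl

end Mollification

theorem stmt15 (d : ℕ) (hd : 1 ≤ d) (s : ℝ) (hs : s ∈ Set.Ioo (0:ℝ) 1)
    (Cds : ℝ) (hC : 0 < Cds) (p : ℝ) (hp : 1 < p)
    (ρ : Ed d → ℝ) (hρpos : ∀ x, 0 < ρ x) (hρm : Measurable ρ)
    (c C γ₀ γ : ℝ) (hw : TwoPowerWeight d ρ c C γ₀ γ)
    (hγ₀ : γ₀ ∈ Set.Ico (0:ℝ) d) (hγ : γ ∈ Set.Icc (0:ℝ) ((d:ℝ) + p * s))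
    (η : Ed d → ℝ) (hη : IsMollifier d η)
    (v V : Ed d → ℝ) (hvV : MemX d s Cds p ρ v V) :
    (∀ ε > (0:ℝ),
      (∀ x : Ed d, fracLap d s Cds (mollify d η ε v) x = mollify d η ε V x) ∧
      ContDiff ℝ (⊤ : ℕ∞) (mollify d η ε v) ∧
      MemX d s Cds p ρ (mollify d η ε v) (mollify d η ε V)) ∧
    Tendsto (fun ε : ℝ =>
        xNorm d p ρ (fun x => mollify d η ε v x - v x)
          (fun x => mollify d η ε V x - V x))
      (𝓝[>] (0:ℝ)) (𝓝 0) := by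
  have : NeZero d := ⟨by omega⟩
  exact stmt15_general hs hp (hw.isAdmissibleWeight hρpos hρm hp hγ₀
    ⟨by nlinarith [hs.1, hγ.1], by nlinarith [hs.1, hγ.2]⟩) hη hvV
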